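/- arXiv:1310.0670 — 2 statements merged into one kernel-verified Lean document; each statement's English description precedes it below -/
import Mathlib

section
/- Let Φ : α^ℤ → α^ℤ be a cellular automaton on a finite alphabet α with quiescent state B. The following four conditions are equivalent: (1) Φ is nilpotent; (2) for every x ∈ α^ℤ there exists n ∈ ℕ such that Φ^n(x) = B^∞; (3) for every x ∈ α^ℤ and every i ∈ ℤ there exists n ∈ ℕ such that Φ^m(x)_i = B for all m ≥ n; (4) the limit set satisfies Ω_Φ = {B^∞}. -/
/-!
The hard implication is that a cellular automaton under which every cell of every configuration is
eventually `B` must be nilpotent. Baire's theorem is used twice.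

Applied to the *mortal* configurations (finite support, eventually erased), it yields a mortal `x`
and a time after which every mortal configuration close to `x` keeps the cell `0` blank. A mortal
`g` that is blank on a long interval can be superposed with `x`; once `x` has died out, only `g`
remains, so the orbit of `g` keeps the cell `0` blank at late times. At early times, information
from the support of `g` has not yet reached the cell `0`. Hence there is `K` such that mortal
configurations blank on `[-K, K]` never disturb the cell `0`.

Applied to the full shift, it yields a word which eventually builds a permanent blank *wall* as wide
as the radius. Surround a large central piece of an arbitrary configuration by two such words: once
the walls stand, what lies between them evolves in isolation, so it is mortal. Therefore *every*
configuration which is blank on a sufficiently long interval never disturbs the cell `0`. By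
compactness every orbit blanks that interval within a bounded time, which gives nilpotency.
-/

namespace CellularAutomaton

open Filter Function Set Topology
open SymbolicDynamics.FullShift

section Topology

theorem exists_mem_nhdsWithin_of_closure_subset_iUnion {X : Type*} [TopologicalSpace X]
    [CompactSpace X] [T2Space X] {P : Set X} (hP : P.Nonempty) {F : ℕ → Set X}
    (hF : ∀ n, IsClosed (F n)) (hcover : closure P ⊆ ⋃ n, F n) :
    ∃ n, ∃ x ∈ P, F n ∈ 𝓝[P] x := by
  have : CompactSpace (closure P) := isCompact_iff_compactSpace.1 isClosed_closure.isCompact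
  have : Nonempty (closure P) := hP.closure.to_subtype
  obtain ⟨n, z, hz⟩ := nonempty_interior_of_iUnion_of_closed
    (f := fun n ↦ {z : closure P | (z : X) ∈ F n})
    (fun n ↦ (hF n).preimage continuous_subtype_val)
    (eq_univ_of_forall fun z ↦ by
      obtain ⟨n, hn⟩ := mem_iUnion.1 (hcover z.2)
      exact mem_iUnion.2 ⟨n, hn⟩)
  obtain ⟨u, hu, huF⟩ := (mem_nhds_subtype _ z _).1 (mem_interior_iff_mem_nhds.1 hz)
  obtain ⟨V, hVu, hV, hzV⟩ := mem_nhds_iff.1 hu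
  obtain ⟨x, hxV, hxP⟩ := mem_closure_iff.1 z.2 V hV hzV
  exact ⟨n, x, hxP, mem_nhdsWithin.2 ⟨V, hV, hxV, fun y ⟨hyV, hyP⟩ ↦
    huF (a := ⟨y, subset_closure hyP⟩) (hVu hyV)⟩⟩

variable {ι α : Type*} [TopologicalSpace α]

theorem exists_cylinder_subset_of_mem_nhds {x : ι → α} {s : Set (ι → α)} (hs : s ∈ 𝓝 x) :
    ∃ U : Finset ι, cylinder U x ⊆ s := by
  obtain ⟨t, hts, ht, hxt⟩ := mem_nhds_iff.1 hs
  obtain ⟨U, u, hu, hut⟩ := isOpen_pi_iff.1 ht x hxt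
  refine ⟨U, fun y hy ↦ hts (hut fun i hi ↦ ?_)⟩
  rw [hy i hi]
  exact (hu i hi).2

theorem exists_finset_dependsOn [CompactSpace α] [DiscreteTopology α] {β : Type*}
    [TopologicalSpace β] [DiscreteTopology β] {f : (ι → α) → β} (hf : Continuous f) :
    ∃ U : Finset ι, DependsOn f U := by
  classical
  suffices ∃ U : Finset ι, ∀ x ∈ univ, ∀ y ∈ cylinder U x, f y = f x by
    obtain ⟨U, hU⟩ := this
    exact ⟨U, fun y x hyx ↦ hU x (mem_univ x) y hyx⟩
  refine isCompact_univ.induction_on ⟨∅, by simp only [mem_empty_iff_false, false_imp_iff,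
    implies_true]⟩ (fun s t hst ⟨U, hU⟩ ↦ ⟨U, fun x hx ↦ hU x (hst hx)⟩) ?_ fun x _ ↦ ?_
  · rintro s t ⟨U, hU⟩ ⟨V, hV⟩
    refine ⟨U ∪ V, ?_⟩
    rintro x (hx | hx) y hy
    · exact hU x hx y fun i hi ↦ hy i (Finset.mem_union_left V hi)
    · exact hV x hx y fun i hi ↦ hy i (Finset.mem_union_right U hi)
  · obtain ⟨U, hU⟩ := exists_cylinder_subset_of_mem_nhds
      (hf.continuousAt.preimage_mem_nhds ((isOpen_discrete {f x}).mem_nhds rfl))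
    refine ⟨cylinder U x, mem_nhdsWithin_of_mem_nhds
      ((isOpen_cylinder U x).mem_nhds fun _ _ ↦ rfl), U, fun y hy z hz ↦ ?_⟩
    exact (hU fun i hi ↦ (hz i hi).trans (hy i hi) : f z = f x).trans (hU hy : f y = f x).symm

end Topology

theorem exists_coe_finset_subset_Icc (U : Finset ℤ) : ∃ k : ℕ, (U : Set ℤ) ⊆ Icc (-k : ℤ) k := by
  refine ⟨U.sup Int.natAbs, fun i hi ↦ ?_⟩
  have := Finset.le_sup (f := Int.natAbs) hi
  rw [mem_Icc]
  omega

variable {α : Type*} {Φ Ψ : (ℤ → α) → ℤ → α} {B : α} {r s : ℕ}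

theorem exists_mem_cylinder_shift (x w : ℤ → α) (U : Finset ℤ) (L : ℕ) :
    ∃ a : ℤ, 0 ≤ a ∧ ∃ z, (∀ i ∈ Icc (-L : ℤ) L, z i = x i) ∧
      shift a z ∈ cylinder U w ∧ shift (-a) z ∈ cylinder U w := by
  obtain ⟨k, hk⟩ := exists_coe_finset_subset_Icc U
  set a : ℤ := L + k + 1
  refine ⟨a, by omega, (Icc (-L : ℤ) L).piecewise x
    ((Ioi 0).piecewise (fun i ↦ w (i - a)) fun i ↦ w (i + a)),
    fun i hi ↦ piecewise_eq_of_mem _ _ _ hi, fun i hi ↦ ?_, fun i hi ↦ ?_⟩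
  all_goals
    have hik := hk hi
    rw [mem_Icc] at hik
    rw [shift_apply, piecewise_eq_of_notMem _ _ _ (by rw [mem_Icc]; omega)]
  · rw [piecewise_eq_of_mem _ _ _ (by rw [mem_Ioi]; omega), add_sub_cancel_left]
  · rw [piecewise_eq_of_notMem _ _ _ (by rw [mem_Ioi]; omega), neg_add_cancel_comm]

section Locality

/-- `Φ` has radius `r`: the new state of a cell depends only on the cells at distance at most `r`,
as for the local rule of a cellular automaton. -/
def HasRadius (Φ : (ℤ → α) → ℤ → α) (r : ℕ) : Prop :=
  ∀ i : ℤ, DependsOn (fun x ↦ Φ x i) (Icc (i - r) (i + r))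

theorem HasRadius.comp (hΦ : HasRadius Φ r) (hΨ : HasRadius Ψ s) : HasRadius (Φ ∘ Ψ) (r + s) := by
  intro i x y hxy
  refine hΦ i fun j hj ↦ hΨ j fun k hk ↦ hxy k ?_
  simp only [mem_Icc] at *
  omega

theorem HasRadius.iterate (hΦ : HasRadius Φ r) (n : ℕ) : HasRadius Φ^[n] (n * r) := by
  induction n with
  | zero => exact fun i x y hxy ↦ hxy i (by simp)
  | succ n ih =>
    rw [iterate_succ, Nat.succ_mul]
    exact ih.comp hΦ

theorem HasRadius.apply_eq_of_blank (hΦ : HasRadius Φ r) (hB : Φ (fun _ ↦ B) = fun _ ↦ B)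
    {x : ℤ → α} {i : ℤ} (hx : ∀ j ∈ Icc (i - r) (i + r), x j = B) : Φ x i = B :=
  (hΦ i hx).trans (congrFun hB i)

/-- A cellular automaton on `α^ℤ`: a continuous self-map commuting with the shifts. -/
structure IsCellularAutomaton [TopologicalSpace α] (Φ : (ℤ → α) → ℤ → α) : Prop where
  continuous : Continuous Φ
  commute_shift : ∀ a : ℤ, Function.Commute Φ (shift a)

theorem commute_shift_of_commute_shift_one (h : Function.Commute Φ (shift (1 : ℤ))) (a : ℤ) :
    Function.Commute Φ (shift a) := by
  have hneg : Function.Commute Φ (shift (-1 : ℤ)) :=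
    h.semiconj.inverses_right (fun x ↦ by rw [← shift_add, neg_add_cancel, shift_zero])
      (fun x ↦ by rw [← shift_add, add_neg_cancel, shift_zero])
  induction a with
  | zero => exact fun x ↦ by rw [shift_zero, shift_zero]
  | succ n ih => exact fun x ↦ by rw [shift_add, shift_add, h.eq, ih.eq]
  | pred n ih => exact fun x ↦ by rw [sub_eq_add_neg, shift_add, shift_add, hneg.eq, ih.eq]

variable [TopologicalSpace α]

theorem IsCellularAutomaton.iterate (hΦ : IsCellularAutomaton Φ) (n : ℕ) :
    IsCellularAutomaton Φ^[n] where
  continuous := hΦ.continuous.iterate n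
  commute_shift a := (hΦ.commute_shift a).iterate_left n

theorem IsCellularAutomaton.apply_eq_apply_shift_zero (hΦ : IsCellularAutomaton Φ) (x : ℤ → α)
    (i : ℤ) : Φ x i = Φ (shift i x) 0 := by
  rw [(hΦ.commute_shift i).eq, shift_apply, add_zero]

theorem IsCellularAutomaton.eq_blank_of_forall_apply_zero (hΦ : IsCellularAutomaton Φ)
    (h : ∀ x, Φ x 0 = B) (x : ℤ → α) : Φ x = fun _ ↦ B :=
  funext fun i ↦ (hΦ.apply_eq_apply_shift_zero x i).trans (h _)

theorem IsCellularAutomaton.apply_const (hΦ : IsCellularAutomaton Φ) (b : α) (i : ℤ) :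
    Φ (fun _ ↦ b) = fun _ ↦ Φ (fun _ ↦ b) i :=
  funext fun j ↦ (hΦ.apply_eq_apply_shift_zero _ j).trans
    (hΦ.apply_eq_apply_shift_zero (fun _ ↦ b) i).symm

theorem IsCellularAutomaton.exists_hasRadius [CompactSpace α] [DiscreteTopology α]
    (hΦ : IsCellularAutomaton Φ) : ∃ r, HasRadius Φ r := by
  obtain ⟨U, hU⟩ := exists_finset_dependsOn ((continuous_apply 0).comp hΦ.continuous)
  obtain ⟨r, hr⟩ := exists_coe_finset_subset_Icc U
  refine ⟨r, fun i x y hxy ↦ ?_⟩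
  dsimp only
  rw [hΦ.apply_eq_apply_shift_zero x, hΦ.apply_eq_apply_shift_zero y]
  refine hU fun j hj ↦ hxy (i + j) ?_
  have := hr hj
  simp only [mem_Icc] at *
  omega

end Locality

section Superposition

theorem HasRadius.apply_piecewise_eq (hΦ : HasRadius Φ r) (hB : Φ (fun _ ↦ B) = fun _ ↦ B)
    {x g : ℤ → α} {K : ℕ} (hxs : ∀ i ∉ Icc (-s : ℤ) s, x i = B) (hx : Φ x = fun _ ↦ B)
    (hg : ∀ i ∈ Icc (-K : ℤ) K, g i = B) (hK : s + 2 * r ≤ K) :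
    Φ ((Icc (-K : ℤ) K).piecewise x g) = Φ g := by
  funext i
  by_cases hi : Icc (i - r) (i + r) ⊆ Icc (-K : ℤ) K
  · calc
      Φ ((Icc (-K : ℤ) K).piecewise x g) i = Φ x i :=
        hΦ i fun j hj ↦ piecewise_eq_of_mem _ _ _ (hi hj)
      _ = B := congrFun hx i
      _ = Φ g i := (hΦ.apply_eq_of_blank hB fun j hj ↦ hg j (hi hj)).symm
  · refine hΦ i fun j hj ↦ ?_
    by_cases hjK : j ∈ Icc (-K : ℤ) K
    · have hjs : j ∉ Icc (-s : ℤ) s := by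
        rw [Icc_subset_Icc_iff (by omega)] at hi
        simp only [mem_Icc] at *
        omega
      rw [piecewise_eq_of_mem _ _ _ hjK, hxs j hjs, hg j hjK]
    · exact piecewise_eq_of_notMem _ _ _ hjK

theorem HasRadius.apply_piecewise_const (hΦ : HasRadius Φ r) (hB : Φ (fun _ ↦ B) = fun _ ↦ B)
    {y : ℤ → α} {a b : ℤ} (ha : ∀ i ∈ Icc (a - r) (a + r), y i = B)
    (hb : ∀ i ∈ Icc (b - r) (b + r), y i = B) :
    Φ ((Icc a b).piecewise y fun _ ↦ B) = (Icc a b).piecewise (Φ y) fun _ ↦ B := by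
  have blank_of_near_wall {j : ℤ} (hj : j ∈ Icc (a - r) (a + r) ∨ j ∈ Icc (b - r) (b + r)) :
      y j = B := hj.elim (ha j) (hb j)
  funext i
  by_cases hi : i ∈ Icc a b
  · rw [piecewise_eq_of_mem _ _ _ hi]
    refine hΦ i fun j hj ↦ ?_
    by_cases hjab : j ∈ Icc a b
    · exact piecewise_eq_of_mem _ _ _ hjab
    · rw [piecewise_eq_of_notMem _ _ _ hjab]
      refine (blank_of_near_wall ?_).symm
      simp only [mem_Icc] at *
      omega
  · rw [piecewise_eq_of_notMem _ _ _ hi]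
    refine hΦ.apply_eq_of_blank hB fun j hj ↦ ?_
    by_cases hjab : j ∈ Icc a b
    · rw [piecewise_eq_of_mem _ _ _ hjab]
      refine blank_of_near_wall ?_
      simp only [mem_Icc] at *
      omega
    · exact piecewise_eq_of_notMem _ _ _ hjab

theorem HasRadius.iterate_piecewise_const (hΦ : HasRadius Φ r) (hB : Φ (fun _ ↦ B) = fun _ ↦ B)
    {y : ℤ → α} {a b : ℤ} (ha : ∀ n, ∀ i ∈ Icc (a - r) (a + r), Φ^[n] y i = B)
    (hb : ∀ n, ∀ i ∈ Icc (b - r) (b + r), Φ^[n] y i = B) (n : ℕ) :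
    Φ^[n] ((Icc a b).piecewise y fun _ ↦ B) = (Icc a b).piecewise (Φ^[n] y) fun _ ↦ B := by
  induction n with
  | zero => rfl
  | succ n ih =>
    rw [iterate_succ_apply', ih, hΦ.apply_piecewise_const hB (ha n) (hb n), iterate_succ_apply']

end Superposition

section Mortal

/-- The finite configurations (all but finitely many cells are in state `B`) that are erased by some
iterate of `Φ`. -/
def mortal (Φ : (ℤ → α) → ℤ → α) (B : α) : Set (ℤ → α) :=
  {x | {i | x i ≠ B}.Finite ∧ ∃ n, Φ^[n] x = fun _ ↦ B}

theorem exists_blank_outside_Icc {x : ℤ → α} (hx : {i | x i ≠ B}.Finite) :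
    ∃ s : ℕ, ∀ i ∉ Icc (-s : ℤ) s, x i = B := by
  obtain ⟨s, hs⟩ := exists_coe_finset_subset_Icc hx.toFinset
  rw [hx.coe_toFinset] at hs
  exact ⟨s, fun i hi ↦ not_not.1 fun hxi ↦ hi (hs hxi)⟩

theorem piecewise_mem_mortal_of_iterate_eq (hB : Φ (fun _ ↦ B) = fun _ ↦ B) {x g : ℤ → α}
    {t : Set ℤ} [∀ i, Decidable (i ∈ t)] {n : ℕ} (hx : {i | x i ≠ B}.Finite) (hg : g ∈ mortal Φ B)
    (h : Φ^[n] (t.piecewise x g) = Φ^[n] g) : t.piecewise x g ∈ mortal Φ B := by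
  obtain ⟨hgfin, m, hm⟩ := hg
  refine ⟨(hx.union hgfin).subset fun i hi ↦ ?_, m + n, ?_⟩
  · by_cases hit : i ∈ t
    · exact Or.inl (by rwa [mem_ofPred_eq, piecewise_eq_of_mem _ _ _ hit] at hi)
    · exact Or.inr (by rwa [mem_ofPred_eq, piecewise_eq_of_notMem _ _ _ hit] at hi)
  · rw [iterate_add_apply, h, ← iterate_add_apply, Nat.add_comm, iterate_add_apply, hm,
      iterate_fixed hB]

end Mortal

section Asymptotic

/-- Condition (3): every cell of every orbit is eventually in state `B`. -/
def IsAsymptoticallyNilpotent (Φ : (ℤ → α) → ℤ → α) (B : α) : Prop :=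
  ∀ x i, ∀ᶠ n in atTop, Φ^[n] x i = B

theorem IsAsymptoticallyNilpotent.eventually_mem_cylinder (h : IsAsymptoticallyNilpotent Φ B)
    (S : Finset ℤ) (x : ℤ → α) : ∀ᶠ n in atTop, Φ^[n] x ∈ cylinder S fun _ ↦ B :=
  (eventually_all_finset S).2 fun i _ ↦ h x i

theorem IsAsymptoticallyNilpotent.piecewise_const_mem_mortal (h : IsAsymptoticallyNilpotent Φ B)
    (hB : Φ (fun _ ↦ B) = fun _ ↦ B) (hr : HasRadius Φ r) {y : ℤ → α} {a b : ℤ}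
    (ha : ∀ n, ∀ i ∈ Icc (a - r) (a + r), Φ^[n] y i = B)
    (hb : ∀ n, ∀ i ∈ Icc (b - r) (b + r), Φ^[n] y i = B) :
    ((Icc a b).piecewise y fun _ ↦ B) ∈ mortal Φ B := by
  refine ⟨(finite_Icc a b).subset fun i hi ↦ not_not.1 fun hiab ↦
    hi (piecewise_eq_of_notMem _ _ _ hiab), ?_⟩
  obtain ⟨n, hn⟩ := (h.eventually_mem_cylinder (Finset.Icc a b) y).exists
  refine ⟨n, ?_⟩
  rw [hr.iterate_piecewise_const hB ha hb]
  funext i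
  by_cases hi : i ∈ Icc a b
  · rw [piecewise_eq_of_mem _ _ _ hi, hn i (Finset.mem_Icc.2 hi)]
  · exact piecewise_eq_of_notMem _ _ _ hi

theorem IsAsymptoticallyNilpotent.apply_zero_of_walls (h : IsAsymptoticallyNilpotent Φ B)
    (hB : Φ (fun _ ↦ B) = fun _ ↦ B) (hr : HasRadius Φ r) {K : ℕ}
    (hK : ∀ g ∈ mortal Φ B, (∀ i ∈ Icc (-K : ℤ) K, g i = B) → ∀ n, Φ^[n] g 0 = B)
    {y : ℤ → α} {a b : ℤ} (h0 : (0 : ℤ) ∈ Icc a b) (hy : ∀ i ∈ Icc (-K : ℤ) K, y i = B)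
    (ha : ∀ n, ∀ i ∈ Icc (a - r) (a + r), Φ^[n] y i = B)
    (hb : ∀ n, ∀ i ∈ Icc (b - r) (b + r), Φ^[n] y i = B) (n : ℕ) : Φ^[n] y 0 = B := by
  have hblank : ∀ i ∈ Icc (-K : ℤ) K, (Icc a b).piecewise y (fun _ ↦ B) i = B := fun i hi ↦ by
    rw [piecewise, hy i hi, ite_self]
  have := hK _ (h.piecewise_const_mem_mortal hB hr ha hb) hblank n
  rwa [hr.iterate_piecewise_const hB ha hb, piecewise_eq_of_mem _ _ _ h0] at this

variable [TopologicalSpace α]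

theorem IsAsymptoticallyNilpotent.quiescent (h : IsAsymptoticallyNilpotent Φ B)
    (hΦ : IsCellularAutomaton Φ) : Φ (fun _ ↦ B) = fun _ ↦ B := by
  obtain ⟨N, hN⟩ := eventually_atTop.1 (h (fun _ ↦ B) 0)
  have hconst (n : ℕ) (hn : N ≤ n) : Φ^[n] (fun _ ↦ B) = fun _ ↦ B := by
    rw [(hΦ.iterate n).apply_const B 0, hN n hn]
  calc
    Φ (fun _ ↦ B) = Φ (Φ^[N] fun _ ↦ B) := by rw [hconst N le_rfl]
    _ = Φ^[N + 1] fun _ ↦ B := (iterate_succ_apply' Φ N _).symm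
    _ = fun _ ↦ B := hconst (N + 1) N.le_succ

variable [Finite α] [DiscreteTopology α]

theorem IsAsymptoticallyNilpotent.exists_forall_mem_cylinder (h : IsAsymptoticallyNilpotent Φ B)
    (hΦ : Continuous Φ) {P : Set (ℤ → α)} (hP : P.Nonempty) (S : Finset ℤ) :
    ∃ x ∈ P, ∃ (U : Finset ℤ) (N : ℕ), ∀ y ∈ P, y ∈ cylinder U x →
      ∀ n ≥ N, Φ^[n] y ∈ cylinder S fun _ ↦ B := by
  have hclosed (N : ℕ) : IsClosed {y | ∀ n ≥ N, Φ^[n] y ∈ cylinder S fun _ ↦ B} := by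
    simp only [ofPred_forall]
    exact isClosed_iInter fun n ↦ isClosed_iInter fun _ ↦
      (isClosed_cylinder S _).preimage (hΦ.iterate n)
  obtain ⟨N, x, hxP, hx⟩ := exists_mem_nhdsWithin_of_closure_subset_iUnion hP hclosed fun y _ ↦
    mem_iUnion.2 (eventually_atTop.1 (h.eventually_mem_cylinder S y))
  obtain ⟨V, hV, hVx⟩ := mem_nhdsWithin_iff_exists_mem_nhds_inter.1 hx
  obtain ⟨U, hU⟩ := exists_cylinder_subset_of_mem_nhds hV
  exact ⟨x, hxP, U, N, fun y hyP hyU ↦ hVx ⟨hU hyU, hyP⟩⟩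

theorem IsAsymptoticallyNilpotent.exists_forall_mortal_apply_zero
    (h : IsAsymptoticallyNilpotent Φ B) (hB : Φ (fun _ ↦ B) = fun _ ↦ B) (hΦ : Continuous Φ)
    (hr : HasRadius Φ r) :
    ∃ K : ℕ, ∀ g ∈ mortal Φ B, (∀ i ∈ Icc (-K : ℤ) K, g i = B) → ∀ n, Φ^[n] g 0 = B := by
  have hne : (mortal Φ B).Nonempty := ⟨fun _ ↦ B, by simp, 0, rfl⟩
  obtain ⟨x, ⟨hxfin, M, hM⟩, U, N, hx⟩ := h.exists_forall_mem_cylinder hΦ hne {0}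
  obtain ⟨s, hs⟩ := exists_blank_outside_Icc hxfin
  obtain ⟨k, hk⟩ := exists_coe_finset_subset_Icc U
  refine ⟨k + (s + 2 * (M * r)) + (M + N) * r, fun g hg hgK n ↦ ?_⟩
  set K := k + (s + 2 * (M * r)) + (M + N) * r
  obtain hn | hn := le_total n (M + N)
  · refine (hr.iterate n).apply_eq_of_blank (iterate_fixed hB n) fun j hj ↦ hgK j ?_
    have := Nat.mul_le_mul_right r hn
    simp only [mem_Icc] at *
    omega
  · have herase : Φ^[M] ((Icc (-K : ℤ) K).piecewise x g) = Φ^[M] g :=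
      (hr.iterate M).apply_piecewise_eq (iterate_fixed hB M) hs hM hgK (by omega)
    have hnear : (Icc (-K : ℤ) K).piecewise x g ∈ cylinder U x := fun i hi ↦
      piecewise_eq_of_mem _ _ _ (Icc_subset_Icc (by omega) (by omega) (hk hi))
    obtain ⟨m, rfl⟩ := Nat.exists_eq_add_of_le' (show M ≤ n by omega)
    calc
      Φ^[m + M] g 0 = Φ^[m + M] ((Icc (-K : ℤ) K).piecewise x g) 0 := by
        rw [iterate_add_apply, ← herase, ← iterate_add_apply]
      _ = B := hx _ (piecewise_mem_mortal_of_iterate_eq hB hxfin hg herase) hnear _ (by omega) 0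
        (Finset.mem_singleton_self 0)

theorem IsAsymptoticallyNilpotent.exists_forall_apply_zero (h : IsAsymptoticallyNilpotent Φ B)
    (hΦ : IsCellularAutomaton Φ) :
    ∃ K : ℕ, ∀ x, (∀ i ∈ Icc (-K : ℤ) K, x i = B) → ∀ n, Φ^[n] x 0 = B := by
  have hB := h.quiescent hΦ
  obtain ⟨r, hr⟩ := hΦ.exists_hasRadius
  obtain ⟨K, hK⟩ := h.exists_forall_mortal_apply_zero hB hΦ.continuous hr
  obtain ⟨w, -, U, N, hw⟩ :=
    h.exists_forall_mem_cylinder hΦ.continuous ⟨fun _ ↦ B, mem_univ _⟩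
      (Finset.Icc (-r : ℤ) r)
  have hwall {z : ℤ → α} {c : ℤ} (hz : shift c z ∈ cylinder U w) (m : ℕ) :
      ∀ i ∈ Icc (c - r) (c + r), Φ^[m] (Φ^[N] z) i = B := fun i hi ↦ by
    have := hw _ (mem_univ _) hz (m + N) (Nat.le_add_left N m) (i - c)
      (by rw [mem_Icc] at hi; rw [Finset.mem_Icc]; omega)
    rwa [((hΦ.iterate _).commute_shift c).eq, shift_apply, add_sub_cancel,
      iterate_add_apply] at this
  refine ⟨K + N * r, fun x hx n ↦ ?_⟩
  obtain hn | hn := le_total n N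
  · refine (hr.iterate n).apply_eq_of_blank (iterate_fixed hB n) fun j hj ↦ hx j ?_
    have := Nat.mul_le_mul_right r hn
    simp only [mem_Icc] at *
    omega
  obtain ⟨a, ha, z, hzx, hza, hzna⟩ := exists_mem_cylinder_shift x w U (K + N * r + n * r)
  have hzblank : ∀ i ∈ Icc (-K : ℤ) K, Φ^[N] z i = B := fun i hi ↦ by
    refine (hr.iterate N).apply_eq_of_blank (iterate_fixed hB N) fun j hj ↦ ?_
    rw [hzx j (by simp only [mem_Icc] at *; omega), hx j (by simp only [mem_Icc] at *; omega)]
  obtain ⟨m, rfl⟩ := Nat.exists_eq_add_of_le' hn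
  calc
    Φ^[m + N] x 0 = Φ^[m + N] z 0 :=
      hr.iterate (m + N) 0 fun j hj ↦ (hzx j (by simp only [mem_Icc] at *; omega)).symm
    _ = Φ^[m] (Φ^[N] z) 0 := by rw [iterate_add_apply]
    _ = B := h.apply_zero_of_walls hB hr hK (mem_Icc.2 ⟨by omega, ha⟩) hzblank (hwall hzna)
      (hwall hza) m

theorem IsAsymptoticallyNilpotent.exists_forall_exists_le_mem_cylinder
    (h : IsAsymptoticallyNilpotent Φ B) (hΦ : Continuous Φ) (S : Finset ℤ) :
    ∃ N, ∀ x, ∃ n ≤ N, Φ^[n] x ∈ cylinder S fun _ ↦ B := by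
  obtain ⟨T, hT⟩ := isCompact_univ.elim_finite_subcover
    (fun n ↦ Φ^[n] ⁻¹' cylinder S fun _ ↦ B)
    (fun n ↦ (isOpen_cylinder S _).preimage (hΦ.iterate n))
    fun x _ ↦ mem_iUnion.2 (h.eventually_mem_cylinder S x).exists
  refine ⟨T.sup id, fun x ↦ ?_⟩
  obtain ⟨n, hnT, hn⟩ := mem_iUnion₂.1 (hT (mem_univ x))
  exact ⟨n, Finset.le_sup (f := id) hnT, hn⟩

theorem IsAsymptoticallyNilpotent.exists_forall_iterate_eq (h : IsAsymptoticallyNilpotent Φ B)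
    (hΦ : IsCellularAutomaton Φ) : ∃ n, ∀ x, Φ^[n] x = fun _ ↦ B := by
  obtain ⟨K, hK⟩ := h.exists_forall_apply_zero hΦ
  obtain ⟨N, hN⟩ :=
    h.exists_forall_exists_le_mem_cylinder hΦ.continuous (Finset.Icc (-K : ℤ) K)
  refine ⟨N, (hΦ.iterate N).eq_blank_of_forall_apply_zero fun x ↦ ?_⟩
  obtain ⟨n, hnN, hn⟩ := hN x
  rw [← Nat.sub_add_cancel hnN, iterate_add_apply]
  exact hK _ (fun i hi ↦ hn i (Finset.mem_Icc.2 hi)) _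

end Asymptotic

section Implications

variable [TopologicalSpace α] [Finite α] [DiscreteTopology α]

theorem quiescent_of_forall_exists_iterate_eq (hΦ : IsCellularAutomaton Φ)
    (h : ∀ x, ∃ n, Φ^[n] x = fun _ ↦ B) : Φ (fun _ ↦ B) = fun _ ↦ B := by
  obtain ⟨r, hr⟩ := hΦ.exists_hasRadius
  set C := Φ (fun _ ↦ B) 0
  have hC : Φ (fun _ ↦ B) = fun _ ↦ C := hΦ.apply_const B 0
  -- Far from the origin this configuration looks like `B^∞` on the left and `Φ(B^∞)` on the right.
  obtain ⟨n, hn⟩ := h ((Iio 0).piecewise (fun _ ↦ B) fun _ ↦ C)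
  have hleft : Φ^[n] (fun _ ↦ B) = fun _ ↦ B := by
    rw [(hΦ.iterate n).apply_const B (-(n * r : ℕ) - 1)]
    refine funext fun _ ↦ (hr.iterate n _ fun j hj ↦ ?_).trans (congrFun hn _)
    have hj0 : j ∈ Iio (0 : ℤ) := by rw [mem_Icc] at hj; rw [mem_Iio]; omega
    rw [piecewise_eq_of_mem _ _ _ hj0]
  have hright : Φ^[n] (fun _ ↦ C) = fun _ ↦ B := by
    rw [(hΦ.iterate n).apply_const C (n * r : ℕ)]
    refine funext fun _ ↦ (hr.iterate n _ fun j hj ↦ ?_).trans (congrFun hn _)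
    have hj0 : j ∉ Iio (0 : ℤ) := by rw [mem_Icc] at hj; rw [mem_Iio]; omega
    rw [piecewise_eq_of_notMem _ _ _ hj0]
  calc
    Φ (fun _ ↦ B) = Φ (Φ^[n] fun _ ↦ B) := by rw [hleft]
    _ = Φ^[n] (Φ fun _ ↦ B) := (Commute.self_iterate Φ n).eq _
    _ = fun _ ↦ B := by rw [hC, hright]

theorem isAsymptoticallyNilpotent_of_forall_exists_iterate_eq (hΦ : IsCellularAutomaton Φ)
    (h : ∀ x, ∃ n, Φ^[n] x = fun _ ↦ B) : IsAsymptoticallyNilpotent Φ B := by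
  have hB := quiescent_of_forall_exists_iterate_eq hΦ h
  intro x i
  obtain ⟨n, hn⟩ := h x
  refine eventually_atTop.2 ⟨n, fun m hm ↦ ?_⟩
  rw [← Nat.sub_add_cancel hm, iterate_add_apply, hn, iterate_fixed hB]

theorem iInter_image_iterate_eq_singleton (hΦ : IsCellularAutomaton Φ) {n : ℕ}
    (hn : ∀ x, Φ^[n] x = fun _ ↦ B) : ⋂ n, Φ^[n] '' univ = {fun _ ↦ B} := by
  have hB := quiescent_of_forall_exists_iterate_eq hΦ fun x ↦ ⟨n, hn x⟩
  refine Subset.antisymm (fun x hx ↦ ?_) ?_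
  · obtain ⟨y, -, rfl⟩ := mem_iInter.1 hx n
    exact hn y
  · rintro _ rfl
    exact mem_iInter.2 fun m ↦ ⟨_, mem_univ _, iterate_fixed hB m⟩

theorem antitone_image_iterate_univ {X : Type*} (f : X → X) : Antitone fun n ↦ f^[n] '' univ := by
  refine antitone_nat_of_succ_le fun n ↦ ?_
  rw [iterate_succ, image_comp]
  exact image_mono (subset_univ _)

theorem exists_forall_iterate_eq_of_iInter_image_eq (hΦ : IsCellularAutomaton Φ)
    (h : ⋂ n, Φ^[n] '' univ = {fun _ ↦ B}) : ∃ n, ∀ x, Φ^[n] x = fun _ ↦ B := by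
  obtain ⟨n, hn⟩ := exists_subset_nhds_of_isCompact
    (antitone_image_iterate_univ Φ).directed_ge
    (fun n ↦ isCompact_univ.image (hΦ.continuous.iterate n)) (U := cylinder {0} fun _ ↦ B) (by
      rw [h]
      rintro _ rfl
      exact (isOpen_cylinder _ _).mem_nhds fun _ _ ↦ rfl)
  exact ⟨n, (hΦ.iterate n).eq_blank_of_forall_apply_zero fun x ↦
    hn (mem_image_of_mem _ (mem_univ x)) 0 (Finset.mem_singleton_self 0)⟩

end Implications

end CellularAutomaton

open CellularAutomaton in
theorem cellular_automaton_nilpotency_characterizations_general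
    {α : Type*} [Finite α] [TopologicalSpace α] [DiscreteTopology α]
    (B : α) (Φ : (ℤ → α) → (ℤ → α))
    (hcont : Continuous Φ)
    (hcomm : ∀ x : ℤ → α, Φ (fun i => x (i + 1)) = fun i => Φ x (i + 1)) :
    List.TFAE
      [ ∃ n : ℕ, ∀ x : ℤ → α, Φ^[n] x = fun _ => B,
        ∀ x : ℤ → α, ∃ n : ℕ, Φ^[n] x = fun _ => B,
        ∀ (x : ℤ → α) (i : ℤ), ∃ n : ℕ, ∀ m : ℕ, n ≤ m → Φ^[m] x i = B,
        (⋂ n : ℕ, Φ^[n] '' Set.univ) = {fun _ => B} ] := by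
  have hshift : SymbolicDynamics.FullShift.shift (1 : ℤ) = fun (x : ℤ → α) i => x (i + 1) :=
    funext₂ fun x i ↦ congrArg x (add_comm 1 i)
  have hΦ : IsCellularAutomaton Φ :=
    ⟨hcont, commute_shift_of_commute_shift_one (hshift ▸ hcomm)⟩
  have h3 : IsAsymptoticallyNilpotent Φ B ↔ _ := forall₂_congr fun _ _ ↦ Filter.eventually_atTop
  rw [← h3]
  tfae_have 1 → 2 := fun ⟨n, hn⟩ x ↦ ⟨n, hn x⟩
  tfae_have 2 → 3 := isAsymptoticallyNilpotent_of_forall_exists_iterate_eq hΦ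
  tfae_have 3 → 1 := fun h ↦ h.exists_forall_iterate_eq hΦ
  tfae_have 1 → 4 := fun ⟨_, hn⟩ ↦ iInter_image_iterate_eq_singleton hΦ hn
  tfae_have 4 → 1 := exists_forall_iterate_eq_of_iInter_image_eq hΦ
  tfae_finish

/-- For a cellular automaton `Φ` on `α^ℤ` (with `α` finite and discrete)
with quiescent state `B`, the following are equivalent:
(1) `Φ` is nilpotent;
(2) every configuration reaches the constant-`B` configuration;
(3) every cell of every configuration is eventually constantly `B`;
(4) the limit set `Ω_Φ = ⋂ₙ Φⁿ(α^ℤ)` equals `{B^∞}`. -/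
theorem cellular_automaton_nilpotency_characterizations
    {α : Type} [Fintype α] [TopologicalSpace α] [DiscreteTopology α]
    (B : α) (Φ : (ℤ → α) → (ℤ → α))
    (hcont : Continuous Φ)
    (hcomm : ∀ x : ℤ → α, Φ (fun i => x (i + 1)) = fun i => Φ x (i + 1))
    (hq : Φ (fun _ => B) = fun _ => B) :
    List.TFAE
      [ ∃ n : ℕ, ∀ x : ℤ → α, Φ^[n] x = fun _ => B,
        ∀ x : ℤ → α, ∃ n : ℕ, Φ^[n] x = fun _ => B,
        ∀ (x : ℤ → α) (i : ℤ), ∃ n : ℕ, ∀ m : ℕ, n ≤ m → Φ^[m] x i = B,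
        (⋂ n : ℕ, Φ^[n] '' Set.univ) = {fun _ => B} ] :=
  cellular_automaton_nilpotency_characterizations_general B Φ hcont hcomm
end

section
/- There exist a finite alphabet α, a state B ∈ α, and a cellular automaton Φ : α^ℤ → α^ℤ with quiescent state B such that Φ is uniquely ergodic but not nilpotent. -/
open MeasureTheory

/-!
The automaton moves particles, each of which carries an address and a payload. Two particles with
matching addresses form a pair, and their payloads make up the state of a particle of the next
level, which the pair simulates: one simulated step takes 212 steps and moves the pair by 196 cells.
The rule is the same at every level. A particle that is due for a collision and finds no partner
is annihilated, and so are the two members of a collision whose check of the payloads fails.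

In a two-sided orbit every particle has passed all its checks, hence it belongs to a pair at every
level. Looking back over a time of order `212 ^ n`, all particles that visit a given column descend
from `O(2 ^ n)` particles of level `n`. Each of these accounts for at most `100 ^ n` visits, because
in every simulated step a pair sweeps past the column and does not dwell near it. Since
`2 * 100 < 212`, the cell at a given site is nonblank with frequency `0`, and every invariant
measure is concentrated on the blank configuration.

The automaton is not nilpotent because simulation also works downwards: a history of `J` steps of a
family of particles is simulated by a history of `212 * J` steps of a larger family.
-/

namespace HierarchicalCA

/-! ### The local rule -/

/-- What the two particles of a pair do with their payloads when they collide. -/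
inductive Instr where
  | idle | nop | check | advance | swap | swapBack
  deriving DecidableEq

instance : Fintype Instr where
  elems := {.idle, .nop, .check, .advance, .swap, .swapBack}
  complete e := by cases e <;> decide

/-- The address of a particle. Two particles of equal clock, heading and task, the left one with
`role = false` and the right one with `role = true`, form a pair; a pair simulates one particle
moving towards `heading` (`true` is right) and about to perform `task`, and `clock` counts the
steps of one simulated step. -/
structure Address where
  role : Bool
  clock : Fin 212
  heading : Bool
  task : Instr
  deriving DecidableEq, Fintype

/-- The state of a particle: its address and its payload. The pair of payloads, left one first, is
the state of the simulated particle. -/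
abbrev State := Address × Address

namespace Address

/-- The direction of motion (`true` is right). In one period the members of a pair run to the
neighbouring pairs (clocks 0-3), back (4-7), out again (8-11), then together towards `heading`
(12-207), and finally back to each other. -/
def dir (a : Address) : Bool :=
  if a.clock.val < 4 then a.role else if a.clock.val < 8 then !a.role
  else if a.clock.val < 12 then a.role else if a.clock.val < 208 then a.heading else !a.role

/-- The instruction executed on taking the address `a`. Only the members facing the collision
partner of the simulated particle swap payloads; of the two pairs in a simulated collision, the
left one then holds both addresses and checks them, the right one holds both payloads and executes
the task. -/
def instr (a : Address) : Instr :=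
  if a.clock = 0 then .advance
  else if a.clock = 8 then if a.task = .idle then .nop else if a.heading then a.task else .check
  else if a.clock = 4 then if a.task ≠ .idle ∧ a.heading = !a.role then .swap else .idle
  else if a.clock = 12 then if a.task ≠ .idle ∧ a.heading = !a.role then .swapBack else .idle
  else .idle

/-- The address one step later. -/
def tick (a : Address) : Address := { a with clock := a.clock + 1 }

/-- At clock `0` heading and task are refreshed from the simulated address `b`. -/
def reload (a b : Address) : Address :=
  if a.clock = 0 then { a with heading := b.dir, task := b.instr } else a

/-- `Address.reload` for left members; right ones are reloaded when payloads are swapped back. -/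
def reloadLeft (a b : Address) : Address := if a.role = false then a.reload b else a

/-- A particle with this address needs a collision partner for its next step. -/
def Due (a : Address) : Prop := a.tick.instr ≠ .idle

end Address

/-- The step of a particle that meets no other. -/
def State.tick (s : State) : State := (s.1.tick, s.2)

/-- The addresses that two particles can take in a common collision, the left one first: those of
the members of a pair, or those of the inner members of two neighbouring pairs. -/
inductive Compat : Address → Address → Prop
  | inner {k : Fin 212} (hk : k = 0 ∨ k = 8) (d : Bool) (e : Instr) :
      Compat ⟨false, k, d, e⟩ ⟨true, k, d, e⟩
  | outer {k : Fin 212} (hk : k = 4 ∨ k = 12) {e : Instr} (he : e ≠ .idle) :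
      Compat ⟨true, k, false, e⟩ ⟨false, k, true, e⟩

open Classical in
/-- The effect of an instruction on the payloads of the left and of the right particle; particles
whose check fails are annihilated. -/
noncomputable def Instr.exec : Instr → Address → Address → Option (Address × Address)
  | .idle, b, c => some (b, c)
  | .nop, b, c => some (b, c)
  | .check, b, c => if Compat b c then some (b, c) else none
  | .advance, b, c => some ((b.reloadLeft c).tick, c)
  | .swap, b, c => some (c, b)
  | .swapBack, b, c => some (c, b.reload c)

open Classical in
/-- The outcome of a collision of `l`, on the left, with `r`, on the right. -/
noncomputable def collide (l r : State) : Option (State × State) :=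
  if Compat l.1.tick r.1.tick then
    (l.1.tick.instr.exec l.2 r.2).map
      fun p => ((l.1.tick.reload p.1, p.1), (r.1.tick.reload p.1, p.2))
  else none

/-- The graph of `collide`, with one constructor for each clock at which collisions occur. -/
inductive Collision : State → State → State → State → Prop
  | advance (d e b c) : Collision (⟨false, 211, d, e⟩, b) (⟨true, 211, d, e⟩, c)
      (⟨false, 0, (b.reloadLeft c).tick.dir, (b.reloadLeft c).tick.instr⟩, (b.reloadLeft c).tick)
      (⟨true, 0, (b.reloadLeft c).tick.dir, (b.reloadLeft c).tick.instr⟩, c)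
  | swap {e} (he : e ≠ Instr.idle) (b c) :
      Collision (⟨true, 3, false, e⟩, b) (⟨false, 3, true, e⟩, c)
        (⟨true, 4, false, e⟩, c) (⟨false, 4, true, e⟩, b)
  | execute {d e b c b' c'}
      (h : (⟨false, 8, d, e⟩ : Address).instr.exec b c = some (b', c')) :
      Collision (⟨false, 7, d, e⟩, b) (⟨true, 7, d, e⟩, c)
        (⟨false, 8, d, e⟩, b') (⟨true, 8, d, e⟩, c')
  | swapBack {e} (he : e ≠ Instr.idle) (b c) :
      Collision (⟨true, 11, false, e⟩, b) (⟨false, 11, true, e⟩, c)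
        (⟨true, 12, false, e⟩, c) (⟨false, 12, true, e⟩, b.reload c)

namespace Address

theorem eq_of_tick_eq {a : Address} {r d : Bool} {k : Fin 212} {e : Instr}
    (h : a.tick = ⟨r, k + 1, d, e⟩) : a = ⟨r, k, d, e⟩ := by
  obtain ⟨r', k', d', e'⟩ := a
  simp_all [Address.tick]

@[simp]
theorem instr_clock_zero (r d : Bool) (e : Instr) :
    (⟨r, 0, d, e⟩ : Address).instr = .advance := rfl

theorem instr_clock_eight (r d : Bool) (e : Instr) : (⟨r, 8, d, e⟩ : Address).instr =
    if e = .idle then .nop else if d then e else .check := rfl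

theorem instr_clock_four {r d : Bool} {e : Instr} (he : e ≠ .idle) (h : d = !r) :
    (⟨r, 4, d, e⟩ : Address).instr = .swap := by
  simp [instr, he, h]

theorem instr_clock_twelve {r d : Bool} {e : Instr} (he : e ≠ .idle) (h : d = !r) :
    (⟨r, 12, d, e⟩ : Address).instr = .swapBack := by
  simp [instr, he, h]

theorem instr_clock_eight_ne_idle (r d : Bool) (e : Instr) :
    (⟨r, 8, d, e⟩ : Address).instr ≠ .idle := by
  rw [instr_clock_eight]
  split_ifs <;> simp_all

theorem instr_eq_idle {a : Address} (h0 : a.clock ≠ 0) (h8 : a.clock ≠ 8)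
    (h : (a.clock ≠ 4 ∧ a.clock ≠ 12) ∨ a.task = .idle ∨ a.heading = a.role) :
    a.instr = .idle := by
  rcases h with h | h | h <;> simp [instr, h0, h8, h]

theorem reload_of_clock_ne_zero {a : Address} (h : a.clock ≠ 0) (b : Address) :
    a.reload b = a := by
  simp [reload, h]

@[simp]
theorem dir_reload (a b : Address) : (a.reload b).dir = a.dir := by
  by_cases h : a.clock = 0 <;> simp [reload, dir, h]

end Address

theorem Compat.instr_ne_idle {a b : Address} (h : Compat a b) :
    a.instr ≠ .idle ∧ b.instr ≠ .idle := by
  rcases h with ⟨rfl | rfl, d, e⟩ | ⟨rfl | rfl, he⟩ <;>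
    simp [Address.instr_clock_eight_ne_idle, Address.instr_clock_four,
      Address.instr_clock_twelve, *]

theorem Collision.of_collide_eq_some {l r l' r' : State} (h : collide l r = some (l', r')) :
    Collision l r l' r' := by
  obtain ⟨a, b⟩ := l
  obtain ⟨a', c⟩ := r
  have hc : Compat a.tick a'.tick := by by_contra hc; simp [collide, hc] at h
  simp only [collide, hc, if_true, Option.map_eq_some_iff] at h
  obtain ⟨⟨b', c'⟩, hex, heq⟩ := h
  simp only [Prod.mk.injEq] at heq
  obtain ⟨rfl, rfl⟩ := heq
  generalize hα : a.tick = α at *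
  generalize hα' : a'.tick = α' at *
  rcases hc with ⟨rfl | rfl, d, e⟩ | ⟨rfl | rfl, he⟩
  · obtain rfl := Address.eq_of_tick_eq (k := 211) hα
    obtain rfl := Address.eq_of_tick_eq (k := 211) hα'
    obtain ⟨rfl, rfl⟩ : (b.reloadLeft c).tick = b' ∧ c = c' := by simpa [Instr.exec] using hex
    exact .advance d e b c
  · obtain rfl := Address.eq_of_tick_eq (k := 7) hα
    obtain rfl := Address.eq_of_tick_eq (k := 7) hα'
    exact .execute hex
  · obtain rfl := Address.eq_of_tick_eq (k := 3) hα
    obtain rfl := Address.eq_of_tick_eq (k := 3) hα'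
    obtain ⟨rfl, rfl⟩ : c = b' ∧ b = c' := by
      simpa [Address.instr_clock_four, Instr.exec, he] using hex
    exact .swap he b c
  · obtain rfl := Address.eq_of_tick_eq (k := 11) hα
    obtain rfl := Address.eq_of_tick_eq (k := 11) hα'
    obtain ⟨rfl, rfl⟩ : c = b' ∧ b.reload c = c' := by
      simpa [Address.instr_clock_twelve, Instr.exec, he] using hex
    exact .swapBack he b c

theorem collide_eq_some_iff {l r l' r' : State} :
    collide l r = some (l', r') ↔ Collision l r l' r' := by
  refine ⟨.of_collide_eq_some, ?_⟩
  rintro (⟨d, e, b, c⟩ | ⟨he, b, c⟩ | h | ⟨he, b, c⟩)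
  · simp [collide, Compat.inner, Address.tick, Instr.exec, Address.reload]
  · simp [collide, Compat.outer, Address.instr_clock_four, Address.tick, Instr.exec,
      Address.reload, he]
  · simp [collide, Compat.inner, Address.tick, Address.reload, h]
  · simp [collide, Compat.outer, Address.instr_clock_twelve, Address.tick, Instr.exec,
      Address.reload, he]

/-! ### Levels of the hierarchy -/

theorem Collision.role_left_eq_false_iff {l r l' r' : State} (h : Collision l r l' r') :
    l'.1.role = false ↔ l'.1.clock = 0 ∨ l'.1.clock = 8 := by
  cases h <;> simp

theorem Collision.role_right_eq_true_iff {l r l' r' : State} (h : Collision l r l' r') :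
    r'.1.role = true ↔ r'.1.clock = 0 ∨ r'.1.clock = 8 := by
  cases h <;> simp

theorem Collision.instr_ne_idle {l r l' r' : State} (h : Collision l r l' r') :
    l'.1.instr ≠ .idle ∧ r'.1.instr ≠ .idle := by
  cases h <;>
    simp [Address.instr_clock_eight_ne_idle, Address.instr_clock_four,
      Address.instr_clock_twelve, *]

theorem Collision.address_eq_tick {l r l' r' : State} (h : Collision l r l' r') :
    (l'.1.clock ≠ 0 → l'.1 = l.1.tick) ∧ (r'.1.clock ≠ 0 → r'.1 = r.1.tick) := by
  cases h <;> simp [Address.tick]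

/-- The sign of a direction. -/
def dirSign (d : Bool) : ℤ := if d then 1 else -1

@[simp] theorem dirSign_true : dirSign true = 1 := rfl
@[simp] theorem dirSign_false : dirSign false = -1 := rfl

/-- The displacement of a particle of role `r` and heading `d` through its moves at the clocks
below `k`. -/
def offset (r d : Bool) (k : ℕ) : ℤ :=
  if k ≤ 4 then dirSign r * k else if k ≤ 8 then dirSign r * (8 - k)
  else if k ≤ 12 then dirSign r * (k - 8)
  else if k ≤ 208 then 4 * dirSign r + dirSign d * (k - 12)
  else 4 * dirSign r + 196 * dirSign d - dirSign r * (k - 208)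

theorem offset_succ (r d : Bool) (e : Instr) (k : Fin 212) :
    offset r d (k.val + 1) = offset r d k.val + dirSign (Address.dir ⟨r, k, d, e⟩) := by
  obtain ⟨k, hk⟩ := k
  simp only [offset, Address.dir]
  push_cast
  split_ifs <;> first | omega | (cases r <;> cases d <;> simp [dirSign] <;> omega)

/-- The particles of one level of the hierarchy, as seen from a space-time diagram. The points `P`
are the particles of the diagram at all times, and `W s t p σ` says that `p` represents a particle
of the level which at time `t` is at position `s` in state `σ`. One step of the level takes time
`T`, moves a particle by `q`, and is undone by `back`. Colliding particles are at distance `D`, and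
`N` relates their points. -/
structure Level {P : Type*} (back : P → P) (W : ℤ → ℤ → P → State → Prop) (q D T : ℤ)
    (N : P → P → Prop) : Prop where
  unique : ∀ {s t p p' σ σ'}, W s t p σ → W s t p' σ' → σ.1.dir = σ'.1.dir → σ = σ' ∧ p = p'
  step : ∀ {s t p σ'}, W s t p σ' →
    ∃ σ, W (s - q * dirSign σ'.1.dir) (t - T) (back p) σ ∧
      ((¬ σ.1.Due ∧ σ' = σ.tick) ∨
       (∃ ρ ρ' p', W (s - q * dirSign σ'.1.dir + D) (t - T) p' ρ ∧
          Collision σ ρ σ' ρ' ∧ N (back p) p') ∨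
       (∃ ρ ρ' p', W (s - q * dirSign σ'.1.dir - D) (t - T) p' ρ ∧
          Collision ρ σ ρ' σ' ∧ N p' (back p)))

namespace Level

variable {P : Type*} {back : P → P} {W : ℤ → ℤ → P → State → Prop} {N : P → P → Prop}
  {q D T s t : ℤ} {p : P}

theorem step_as_left (L : Level back W q D T N) {σ' : State} {x : ℤ} (h : W s t p σ')
    (hx : s - q * dirSign σ'.1.dir = x) (hσ : σ'.1.instr ≠ .idle)
    (hr : σ'.1.role = false ↔ σ'.1.clock = 0 ∨ σ'.1.clock = 8) :
    ∃ σ ρ ρ' p', W x (t - T) (back p) σ ∧ W (x + D) (t - T) p' ρ ∧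
      Collision σ ρ σ' ρ' ∧ N (back p) p' := by
  subst hx
  obtain ⟨σ, h₀, ⟨hn, hs⟩ | ⟨ρ, ρ', p', h₁, hc, hN⟩ | ⟨_, _, _, _, hc, _⟩⟩ :=
    L.step h
  · exact absurd (by rwa [hs] at hσ) hn
  · exact ⟨σ, ρ, ρ', p', h₀, h₁, hc, hN⟩
  · have := hr.trans hc.role_right_eq_true_iff.symm
    simp at this

theorem step_as_right (L : Level back W q D T N) {σ' : State} {x : ℤ} (h : W s t p σ')
    (hx : s - q * dirSign σ'.1.dir = x) (hσ : σ'.1.instr ≠ .idle)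
    (hr : σ'.1.role = true ↔ σ'.1.clock = 0 ∨ σ'.1.clock = 8) :
    ∃ σ ρ ρ' p', W x (t - T) (back p) σ ∧ W (x - D) (t - T) p' ρ ∧
      Collision ρ σ ρ' σ' ∧ N p' (back p) := by
  subst hx
  obtain ⟨σ, h₀, ⟨hn, hs⟩ | ⟨_, _, _, _, hc, _⟩ | ⟨ρ, ρ', p', h₁, hc, hN⟩⟩ :=
    L.step h
  · exact absurd (by rwa [hs] at hσ) hn
  · have := hr.trans hc.role_left_eq_false_iff.symm
    simp at this
  · exact ⟨σ, ρ, ρ', p', h₀, h₁, hc, hN⟩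

theorem before_advance_left (L : Level back W q D T N) {d : Bool} {e : Instr} {A : Address}
    (h : W s t p (⟨false, 0, d, e⟩, A)) :
    ∃ d' e' b c p', W (s + q) (t - T) (back p) (⟨false, 211, d', e'⟩, b) ∧
      W (s + q + D) (t - T) p' (⟨true, 211, d', e'⟩, c) ∧ N (back p) p' ∧
      A = (b.reloadLeft c).tick ∧ d = A.dir ∧ e = A.instr := by
  obtain ⟨σ, ρ, ρ', p', h₀, h₁, hc, hN⟩ := L.step_as_left (x := s + q) h
    (by simp [Address.dir]) (by simp) (by simp)
  cases hc
  exact ⟨_, _, _, _, p', h₀, h₁, hN, rfl, rfl, rfl⟩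

theorem before_advance_right (L : Level back W q D T N) {d : Bool} {e : Instr} {c : Address}
    (h : W s t p (⟨true, 0, d, e⟩, c)) :
    ∃ d' e' b p', W (s - q) (t - T) (back p) (⟨true, 211, d', e'⟩, c) ∧
      W (s - q - D) (t - T) p' (⟨false, 211, d', e'⟩, b) := by
  obtain ⟨σ, ρ, ρ', p', h₀, h₁, hc, -⟩ := L.step_as_right (x := s - q) h
    (by simp [Address.dir]) (by simp) (by simp)
  cases hc
  exact ⟨_, _, _, p', h₀, h₁⟩

theorem before_swap_left (L : Level back W q D T N) {e : Instr} (he : e ≠ .idle) {c : Address}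
    (h : W s t p (⟨true, 4, false, e⟩, c)) :
    ∃ b p', W (s + q) (t - T) (back p) (⟨true, 3, false, e⟩, b) ∧
      W (s + q + D) (t - T) p' (⟨false, 3, true, e⟩, c) ∧ N (back p) p' := by
  obtain ⟨σ, ρ, ρ', p', h₀, h₁, hc, hN⟩ := L.step_as_left (x := s + q) h
    (by simp [Address.dir]) (by simp [Address.instr_clock_four he]) (by simp)
  cases hc
  exact ⟨_, p', h₀, h₁, hN⟩

theorem before_swap_right (L : Level back W q D T N) {e : Instr} (he : e ≠ .idle) {b : Address}
    (h : W s t p (⟨false, 4, true, e⟩, b)) :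
    ∃ c p', W (s - q) (t - T) (back p) (⟨false, 3, true, e⟩, c) ∧
      W (s - q - D) (t - T) p' (⟨true, 3, false, e⟩, b) := by
  obtain ⟨σ, ρ, ρ', p', h₀, h₁, hc, -⟩ := L.step_as_right (x := s - q) h
    (by simp [Address.dir]) (by simp [Address.instr_clock_four he]) (by simp)
  cases hc
  exact ⟨_, p', h₀, h₁⟩

theorem before_execute_left (L : Level back W q D T N) {d : Bool} {e : Instr} {b' : Address}
    (h : W s t p (⟨false, 8, d, e⟩, b')) :
    ∃ b c c' p', W (s + q) (t - T) (back p) (⟨false, 7, d, e⟩, b) ∧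
      W (s + q + D) (t - T) p' (⟨true, 7, d, e⟩, c) ∧
      (⟨false, 8, d, e⟩ : Address).instr.exec b c = some (b', c') := by
  obtain ⟨σ, ρ, ρ', p', h₀, h₁, hc, -⟩ := L.step_as_left (x := s + q) h
    (by simp [Address.dir]) (Address.instr_clock_eight_ne_idle _ _ _) (by simp)
  cases hc
  rename_i hex
  exact ⟨_, _, _, p', h₀, h₁, hex⟩

theorem before_execute_right (L : Level back W q D T N) {d : Bool} {e : Instr} {c' : Address}
    (h : W s t p (⟨true, 8, d, e⟩, c')) :
    ∃ b c b' p', W (s - q) (t - T) (back p) (⟨true, 7, d, e⟩, c) ∧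
      W (s - q - D) (t - T) p' (⟨false, 7, d, e⟩, b) ∧
      (⟨false, 8, d, e⟩ : Address).instr.exec b c = some (b', c') := by
  obtain ⟨σ, ρ, ρ', p', h₀, h₁, hc, -⟩ := L.step_as_right (x := s - q) h
    (by simp [Address.dir]) (Address.instr_clock_eight_ne_idle _ _ _) (by simp)
  cases hc
  rename_i hex
  exact ⟨_, _, _, p', h₀, h₁, hex⟩

theorem before_swapBack_left (L : Level back W q D T N) {e : Instr} (he : e ≠ .idle) {c : Address}
    (h : W s t p (⟨true, 12, false, e⟩, c)) :
    ∃ b p', W (s + q) (t - T) (back p) (⟨true, 11, false, e⟩, b) ∧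
      W (s + q + D) (t - T) p' (⟨false, 11, true, e⟩, c) := by
  obtain ⟨σ, ρ, ρ', p', h₀, h₁, hc, -⟩ := L.step_as_left (x := s + q) h
    (by simp [Address.dir]) (by simp [Address.instr_clock_twelve he]) (by simp)
  cases hc
  exact ⟨_, p', h₀, h₁⟩

theorem before_swapBack_right (L : Level back W q D T N) {e : Instr} (he : e ≠ .idle)
    {a : Address} (h : W s t p (⟨false, 12, true, e⟩, a)) :
    ∃ b c p', W (s - q) (t - T) (back p) (⟨false, 11, true, e⟩, c) ∧
      W (s - q - D) (t - T) p' (⟨true, 11, false, e⟩, b) ∧ a = b.reload c := by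
  obtain ⟨σ, ρ, ρ', p', h₀, h₁, hc, -⟩ := L.step_as_right (x := s - q) h
    (by simp [Address.dir]) (by simp [Address.instr_clock_twelve he]) (by simp)
  cases hc
  exact ⟨_, _, p', h₀, h₁, rfl⟩

end Level

theorem offset_end (r d : Bool) : offset r d 212 = 196 * dirSign d := by
  simp [offset]
  ring

/-- The particles simulated by the pairs of a level, at the times when the clocks of the pairs show
`211`. The simulated particle sits at the left member of the pair. -/
def coarse {P : Type*} (W : ℤ → ℤ → P → State → Prop) (D : ℤ) (s t : ℤ) (p : P) (σ : State) :
    Prop :=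
  ∃ b c d e p', W s t p (⟨false, 211, d, e⟩, b) ∧ W (s + D) t p' (⟨true, 211, d, e⟩, c) ∧
    σ = (b.reloadLeft c, c)

/-- The relation between the points of two colliding simulated particles: the right member of the
left pair meets the left member of the right pair four steps later. -/
def coarseNeighbour {P : Type*} (back : P → P) (W : ℤ → ℤ → P → State → Prop) (N : P → P → Prop)
    (p p' : P) : Prop :=
  ∃ r r', N p (back^[4] r) ∧ N r r' ∧ back^[4] r' = p' ∧
    (∃ s t σ, W s t r σ) ∧ ∃ s t σ, W s t r' σ

namespace Level

variable {P : Type*} {back : P → P} {W : ℤ → ℤ → P → State → Prop} {N : P → P → Prop}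
  {q D T s t : ℤ} {p : P}

theorem before_step (L : Level back W q D T N) {r d : Bool} {k : Fin 212} {e : Instr}
    {b : Address} (hk : k + 1 ≠ 0) (h : W s t p (⟨r, k + 1, d, e⟩, b)) :
    ∃ b', W (s - q * dirSign (Address.dir ⟨r, k + 1, d, e⟩)) (t - T) (back p) (⟨r, k, d, e⟩, b') ∧
      (Address.instr ⟨r, k + 1, d, e⟩ = .idle → b' = b) := by
  obtain ⟨⟨a, b'⟩, h₀, ⟨_, hs⟩ | ⟨_, _, _, _, hc, _⟩ | ⟨_, _, _, _, hc, _⟩⟩ := L.step h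
  · obtain ⟨ha, rfl⟩ := Prod.mk.inj hs
    obtain rfl : a = _ := Address.eq_of_tick_eq ha.symm
    exact ⟨b, h₀, fun _ => rfl⟩
  · obtain rfl : a = _ := Address.eq_of_tick_eq (hc.address_eq_tick.1 hk).symm
    exact ⟨b', h₀, fun hi => absurd hi hc.instr_ne_idle.1⟩
  · obtain rfl : a = _ := Address.eq_of_tick_eq (hc.address_eq_tick.2 hk).symm
    exact ⟨b', h₀, fun hi => absurd hi hc.instr_ne_idle.2⟩

theorem run (L : Level back W q D T N) {r d : Bool} {e : Instr} {j : Fin 212} (n : ℕ) :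
    ∀ {s t : ℤ} {p : P} {k : Fin 212} {b : Address}, W s t p (⟨r, k, d, e⟩, b) →
    j.val + n = k.val →
    ∃ b', W (s - q * (offset r d (k.val + 1) - offset r d (j.val + 1))) (t - n * T) (back^[n] p)
      (⟨r, j, d, e⟩, b') ∧
      ((∀ i, j < i → i ≤ k → Address.instr ⟨r, i, d, e⟩ = .idle) → b' = b) := by
  induction n with
  | zero =>
    intro s t p k b h hjk
    obtain rfl : j = k := Fin.ext hjk
    exact ⟨b, by simpa using h, fun _ => rfl⟩
  | succ n ih =>
    intro s t p k b h hjk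
    obtain ⟨i, rfl, hi⟩ : ∃ i : Fin 212, i + 1 = k ∧ i.val + 1 = k.val :=
      ⟨⟨j.val + n, by omega⟩, by ext; simp [Fin.val_add]; omega, hjk⟩
    obtain ⟨b₁, h₁, hb₁⟩ := L.before_step (fun h0 => by simp [h0] at hi) h
    obtain ⟨b₂, h₂, hb₂⟩ := ih h₁ (by omega)
    refine ⟨b₂, ?_, fun hidle => ?_⟩
    · convert h₂ using 1
      · rw [offset_succ r d e (i + 1), hi]
        ring
      · push_cast
        ring
      · rfl
    · rw [hb₂ fun l hl hl' => hidle l hl (hl'.trans ?_), hb₁ (hidle _ ?_ le_rfl)]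
      all_goals simp only [Fin.lt_def, Fin.le_def]; omega

theorem run_idle (L : Level back W q D T N) {r d : Bool} {e : Instr} {b : Address} {k : Fin 212}
    (h : W s t p (⟨r, k, d, e⟩, b)) (n : ℕ) (j : Fin 212) {s' t' : ℤ} (hjk : j.val + n = k.val)
    (hidle : ∀ i, j < i → i ≤ k → i ≠ 0 ∧ i ≠ 8 ∧ ((i ≠ 4 ∧ i ≠ 12) ∨ e = .idle ∨ d = r))
    (hs : s' = s - q * (offset r d (k.val + 1) - offset r d (j.val + 1)))
    (ht : t' = t - n * T) : W s' t' (back^[n] p) (⟨r, j, d, e⟩, b) := by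
  subst hs ht
  obtain ⟨b', h', hb'⟩ := L.run n h hjk
  rwa [hb' fun i hi hi' => ?_] at h'
  obtain ⟨h0, h8, h⟩ := hidle i hi hi'
  exact Address.instr_eq_idle h0 h8 h

theorem run_eleven_eight (L : Level back W q D T N) {r d : Bool} {e : Instr} {b : Address}
    {s' t' : ℤ} (h : W s t p (⟨r, 11, d, e⟩, b)) (hs : s' = s - 3 * q * dirSign r)
    (ht : t' = t - 3 * T) : W s' t' (back^[3] p) (⟨r, 8, d, e⟩, b) :=
  L.run_idle h 3 8 rfl (by omega) (by simp [offset, hs]; ring) ht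

theorem run_seven_four (L : Level back W q D T N) {r d : Bool} {e : Instr} {b : Address}
    {s' t' : ℤ} (h : W s t p (⟨r, 7, d, e⟩, b)) (hs : s' = s + 3 * q * dirSign r)
    (ht : t' = t - 3 * T) : W s' t' (back^[3] p) (⟨r, 4, d, e⟩, b) :=
  L.run_idle h 3 4 rfl (by omega) (by simp [offset, hs]; ring) ht

theorem run_three_zero (L : Level back W q D T N) {r d : Bool} {e : Instr} {b : Address}
    {s' t' : ℤ} (h : W s t p (⟨r, 3, d, e⟩, b)) (hs : s' = s - 3 * q * dirSign r)
    (ht : t' = t - 3 * T) : W s' t' (back^[3] p) (⟨r, 0, d, e⟩, b) :=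
  L.run_idle h 3 0 rfl (by omega) (by simp [offset, hs]; ring) ht

theorem run_seven_zero (L : Level back W q D T N) {r d : Bool} {e : Instr} {b : Address}
    {s' t' : ℤ} (h : W s t p (⟨r, 7, d, e⟩, b)) (hd : e = .idle ∨ d = r)
    (hs : s' = s + q * dirSign r) (ht : t' = t - 7 * T) :
    W s' t' (back^[7] p) (⟨r, 0, d, e⟩, b) :=
  L.run_idle h 7 0 rfl (fun i _ _ => ⟨by omega, by omega, .inr hd⟩) (by simp [offset, hs]) ht

theorem run_end_twelve (L : Level back W q D T N) {r d : Bool} {e : Instr} {b : Address}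
    {s' t' : ℤ} (h : W s t p (⟨r, 211, d, e⟩, b))
    (hs : s' = s - q * (195 * dirSign d - 4 * dirSign r)) (ht : t' = t - 199 * T) :
    W s' t' (back^[199] p) (⟨r, 12, d, e⟩, b) :=
  L.run_idle h 199 12 rfl (by omega) (by rw [hs]; congr 2; simp [offset]; ring) ht

theorem run_end_eight (L : Level back W q D T N) {r d : Bool} {e : Instr} {b : Address}
    {s' t' : ℤ} (h : W s t p (⟨r, 211, d, e⟩, b)) (hd : e = .idle ∨ d = r)
    (hs : s' = s - q * (196 * dirSign d - dirSign r)) (ht : t' = t - 203 * T) :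
    W s' t' (back^[203] p) (⟨r, 8, d, e⟩, b) :=
  L.run_idle h 203 8 rfl (fun i _ _ => ⟨by omega, by omega, .inr hd⟩)
    (by rw [hs]; congr 2; simp [offset]; ring) ht

theorem coarse_of_advance (L : Level back W q D T N) {s' : ℤ} {p' : P} {d d' : Bool}
    {e e' : Instr} {A c : Address} (h : W s t p (⟨false, 0, d, e⟩, A))
    (h' : W s' t p' (⟨true, 0, d', e'⟩, c)) (hs : s' = s + 2 * q + D) :
    ∃ x, coarse W D (s + q) (t - T) (back p) (x, c) ∧ A = x.tick ∧ d = A.dir ∧ e = A.instr ∧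
      N (back p) (back p') := by
  obtain ⟨d₁, e₁, b, c₁, p₁, hb, hc₁, hN, hA, hd, he⟩ := L.before_advance_left h
  obtain ⟨_, _, _, _, hc, -⟩ := L.before_advance_right h'
  rw [show s' - q = s + q + D by rw [hs]; ring] at hc
  obtain ⟨hσ, rfl⟩ := L.unique hc₁ hc (by simp [Address.dir])
  obtain rfl : c₁ = c := (Prod.mk.inj hσ).2
  exact ⟨b.reloadLeft c₁, ⟨b, c₁, d₁, e₁, _, hb, hc₁, rfl⟩, hA, hd, he, hN⟩

end Level

theorem Instr.exec_check {b c b' c' : Address} (h : Instr.check.exec b c = some (b', c')) :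
    Compat b c ∧ b' = b ∧ c' = c := by
  simp only [Instr.exec] at h
  split_ifs at h with hbc
  simp only [Option.some.injEq, Prod.mk.injEq] at h
  exact ⟨hbc, h.1.symm, h.2.symm⟩

@[simp]
theorem Address.dir_reloadLeft (a b : Address) : (a.reloadLeft b).dir = a.dir := by
  by_cases h : a.role = false <;> simp [reloadLeft, h]

theorem Address.reloadLeft_of_clock_ne_zero {a : Address} (h : a.clock ≠ 0) (b : Address) :
    a.reloadLeft b = a := by
  by_cases hr : a.role = false <;> simp [reloadLeft, hr, reload_of_clock_ne_zero h]

theorem Address.clock_ne_zero_of_instr {a : Address} (h : a.instr = .idle) : a.clock ≠ 0 := by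
  rintro h0
  simp [instr, h0] at h

theorem Compat.reloadLeft_left {a b : Address} (h : Compat a b) (c : Address) :
    a.reloadLeft c = a.reload c := by
  cases h with
  | inner => simp [Address.reloadLeft]
  | outer hk =>
    have h0 : ∀ k : Fin 212, k = 4 ∨ k = 12 → k ≠ 0 := by omega
    rw [Address.reloadLeft_of_clock_ne_zero (h0 _ hk), Address.reload_of_clock_ne_zero (h0 _ hk)]

theorem Compat.reloadLeft_reload_right {a b : Address} (h : Compat a b) (c c' : Address) :
    (b.reload c).reloadLeft c' = b.reload c := by
  cases h with
  | @inner k hk d e => by_cases h0 : k = 0 <;> simp [Address.reloadLeft, Address.reload, h0]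
  | outer hk =>
    have h0 : ∀ k : Fin 212, k = 4 ∨ k = 12 → k ≠ 0 := by omega
    rw [Address.reload_of_clock_ne_zero (h0 _ hk), Address.reloadLeft_of_clock_ne_zero (h0 _ hk)]

namespace Level

variable {P : Type*} {back : P → P} {W : ℤ → ℤ → P → State → Prop} {N : P → P → Prop}
  {q D T s t : ℤ} {p : P}

theorem before_check (L : Level back W q D T N) {e : Instr} (he : e ≠ .idle) {z : Address}
    (h : W s t p (⟨true, 11, false, e⟩, z)) :
    ∃ A b x p₁ p₂, W (s - 4 * q - D) (t - 4 * T) p₁ (⟨false, 7, false, e⟩, A) ∧ Compat A z ∧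
      coarse W D (s - 4 * q - D) (t - 12 * T) (back^[8] p₁) (x, b) ∧ A = x.tick ∧
      A.dir = false ∧ A.instr = e ∧ N (back^[8] p₁) (back^[12] p) ∧
      W s (t - 8 * T) (back^[8] p) (⟨true, 3, false, e⟩, b) ∧
      W (s + D) (t - 8 * T) p₂ (⟨false, 3, true, e⟩, z) ∧ N (back^[8] p) p₂ := by
  have h8 := L.run_eleven_eight (s' := s - 3 * q) h (by simp) rfl
  obtain ⟨A, c, _, p₁, hc, hA, hex⟩ := L.before_execute_right h8
  rw [Address.instr_clock_eight, if_neg he] at hex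
  obtain ⟨hAc, -, rfl⟩ := Instr.exec_check hex
  have h4 := L.run_seven_four (s' := s - q) hc (by simp; ring) rfl
  obtain ⟨b, p₂, hb, hz, hN⟩ := L.before_swap_left he h4
  have h0 := L.run_three_zero (s' := s - 3 * q) (t' := t - 11 * T) hb (by simp) (by ring)
  have hA0 := L.run_seven_zero (s' := s - 5 * q - D) (t' := t - 11 * T) hA (.inr rfl)
    (by simp; ring) (by ring)
  obtain ⟨x, hx, hAx, hd, he', hN'⟩ := L.coarse_of_advance hA0 h0 (by ring)
  refine ⟨A, b, x, p₁, p₂, ?_, hAc, ?_, hAx, hd.symm, he'.symm, hN', ?_, ?_, hN⟩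
  · convert hA using 1 <;> ring
  · convert hx using 1 <;> first | rfl | ring
  · convert hb using 1 <;> first | rfl | ring
  · convert hz using 1 <;> ring

theorem before_perform (L : Level back W q D T N) {e : Instr} (he : e ≠ .idle) {y : Address}
    (h : W s t p (⟨false, 11, true, e⟩, y)) :
    ∃ b c c' x z p₁ p₂, e.exec b c = some (y, c') ∧
      W (s + 4 * q) (t - 4 * T) (back^[4] p) (⟨false, 7, true, e⟩, b) ∧
      W (s + 4 * q + D) (t - 4 * T) p₁ (⟨true, 7, true, e⟩, c) ∧
      coarse W D (s + 4 * q) (t - 12 * T) (back^[12] p) (x, c) ∧ z = x.tick ∧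
      z.dir = true ∧ z.instr = e ∧
      W s (t - 8 * T) (back^[8] p) (⟨false, 3, true, e⟩, z) ∧
      W (s - D) (t - 8 * T) p₂ (⟨true, 3, false, e⟩, b) := by
  have h8 := L.run_eleven_eight (s' := s + 3 * q) h (by simp) rfl
  obtain ⟨b, c, c', p₁, hb, hc, hex⟩ := L.before_execute_left h8
  rw [Address.instr_clock_eight, if_neg he] at hex
  have h4 := L.run_seven_four (s' := s + q) hb (by simp; ring) rfl
  obtain ⟨z, p₂, hz, hb'⟩ := L.before_swap_right he h4
  have h0 := L.run_three_zero (s' := s + 3 * q) (t' := t - 11 * T) hz (by simp) (by ring)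
  have hc0 := L.run_seven_zero (s' := s + 5 * q + D) (t' := t - 11 * T) hc (.inr rfl)
    (by simp; ring) (by ring)
  obtain ⟨x, hx, hzx, hd, he', -⟩ := L.coarse_of_advance h0 hc0 (by ring)
  refine ⟨b, c, c', x, z, p₁, p₂, hex, ?_, ?_, ?_, hzx, hd.symm, he'.symm, ?_, ?_⟩
  · convert hb using 1 <;> first | rfl | ring
  · convert hc using 1 <;> ring
  · convert hx using 1 <;> first | rfl | ring
  · convert hz using 1 <;> first | rfl | ring
  · convert hb' using 1 <;> ring

/-- The simulated collision: `r` and `r'` are the points, four steps after the swap of addresses,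
of the left members of the two pairs. -/
theorem collision_before_swapBack (L : Level back W q D T N) {e : Instr} (he : e ≠ .idle)
    {p' : P} {z y : Address} (hz : W s t p (⟨true, 11, false, e⟩, z))
    (hy : W (s + D) t p' (⟨false, 11, true, e⟩, y)) :
    ∃ A b c c' x x' r r' p₁, Collision (x, b) (x', c) (A.reload y, y) (z.reload y, c') ∧
      Compat A z ∧ A.dir = false ∧ z.dir = true ∧ e.exec b c = some (y, c') ∧
      coarse W D (s - 4 * q - D) (t - 12 * T) (back^[8] r) (x, b) ∧
      coarse W D (s + D + 4 * q) (t - 12 * T) (back^[12] p') (x', c) ∧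
      coarseNeighbour back W N (back^[8] r) (back^[12] p') ∧
      W (s - 4 * q - D) (t - 4 * T) r (⟨false, 7, false, e⟩, A) ∧
      r' = back^[4] p' ∧ W (s + D + 4 * q) (t - 4 * T) r' (⟨false, 7, true, e⟩, b) ∧
      W (s + D + 4 * q + D) (t - 4 * T) p₁ (⟨true, 7, true, e⟩, c) := by
  obtain ⟨A, b, x, r, p₂, hA, hAz, hx, hAx, hdA, heA, hN, hb, hz', hN'⟩ := L.before_check he hz
  obtain ⟨b₁, c, c', x', z₁, p₁, p₃, hex, hb', hc, hx', hzx, hdz, hez, hz₁, hb₁⟩ :=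
    L.before_perform he hy
  rw [add_sub_cancel_right] at hb₁
  obtain rfl : b = b₁ := (Prod.mk.inj (L.unique hb hb₁ rfl).1).2
  obtain ⟨hσ, hp₂⟩ := L.unique hz' hz₁ rfl
  obtain rfl : z = z₁ := (Prod.mk.inj hσ).2
  refine ⟨A, b, c, c', x, x', r, _, p₁, ?_, hAz, hdA, hdz, hex, hx, hx', ?_, hA, rfl, hb', hc⟩
  · rw [← collide_eq_some_iff, collide]
    subst hAx hzx
    simp [hAz, heA, hex]
  · exact ⟨back^[8] p, p₂, hN, hN', hp₂ ▸ rfl, ⟨_, _, _, hb⟩, _, _, _, hz'⟩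

theorem coarse_step_idle (L : Level back W q D T N) {d : Bool} {b c : Address} {p' : P}
    (hb : W s t p (⟨false, 211, d, .idle⟩, b)) (hc : W (s + D) t p' (⟨true, 211, d, .idle⟩, c)) :
    b.dir = d ∧ ∃ σ, coarse W D (s - 196 * q * dirSign d) (t - 212 * T) (back^[212] p) σ ∧
      ¬ σ.1.Due ∧ (b.reloadLeft c, c) = σ.tick := by
  have hb8 := L.run_end_eight hb (.inl rfl) rfl rfl
  obtain ⟨b₁, c₁, c', _, hb7, -, hex⟩ := L.before_execute_left hb8
  obtain rfl : b₁ = b := (Prod.mk.inj (Option.some.inj hex)).1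
  have hb0 := L.run_seven_zero (s' := s - q * (196 * dirSign d + 1)) (t' := t - 211 * T) hb7
    (.inl rfl) (by simp) (by ring)
  have hc8 := L.run_end_eight hc (.inl rfl) rfl rfl
  obtain ⟨b₂, c₂, b', _, hc7, -, hex'⟩ := L.before_execute_right hc8
  obtain rfl : c₂ = c := (Prod.mk.inj (Option.some.inj hex')).2
  have hc0 := L.run_seven_zero (s' := s + D - q * (196 * dirSign d - 1)) (t' := t - 211 * T) hc7
    (.inl rfl) (by simp) (by ring)
  obtain ⟨x, hx, hbx, hd, he, -⟩ := L.coarse_of_advance hb0 hc0 (by ring)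
  refine ⟨hd.symm, (x, c₂), ?_, ?_, ?_⟩
  · convert hx using 1
    · ring
    · ring
    · rfl
  · simp [Address.Due, ← hbx, ← he]
  · rw [Address.reloadLeft_of_clock_ne_zero (Address.clock_ne_zero_of_instr he.symm), hbx]
    rfl

theorem coarse_step_left (L : Level back W q D T N) {e : Instr} (he : e ≠ .idle)
    {b c : Address} {p' : P} (hb : W s t p (⟨false, 211, false, e⟩, b))
    (hc : W (s + D) t p' (⟨true, 211, false, e⟩, c)) :
    b.dir = false ∧ ∃ σ ρ ρ' p'', coarse W D (s + 196 * q) (t - 212 * T) (back^[212] p) σ ∧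
      coarse W D (s + 196 * q + (2 * D + 8 * q)) (t - 212 * T) p'' ρ ∧
      Collision σ ρ (b.reloadLeft c, c) ρ' ∧
      coarseNeighbour back W N (back^[212] p) p'' := by
  have hc12 := L.run_end_twelve (s' := s + D + 199 * q) hc (by simp; ring) rfl
  obtain ⟨z, p₁, hz, hc11⟩ := L.before_swapBack_left he hc12
  obtain ⟨A, y, _, _, x, x', r, -, -, hcol, hAz, hdA, -, -, hx, hx', hN, hA, -⟩ :=
    L.collision_before_swapBack he hz hc11
  have hb8 := L.run_end_eight (s' := s + 195 * q) hb (.inr rfl) (by simp; ring) rfl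
  obtain ⟨b₁, _, _, _, hb7, -, hex⟩ := L.before_execute_left hb8
  rw [Address.instr_clock_eight, if_neg he] at hex
  obtain ⟨-, rfl, -⟩ := Instr.exec_check hex
  have hb7' : W (s + D + 199 * q + q - 4 * q - D) (t - 199 * T - T - 4 * T) (back^[204] p)
      (⟨false, 7, false, e⟩, b) := by
    convert hb7 using 1 <;> first | rfl | ring
  obtain ⟨hσ, rfl⟩ := L.unique hb7' hA rfl
  obtain rfl : b = A := (Prod.mk.inj hσ).2
  refine ⟨hdA, _, _, _, _, ?_, ?_, hAz.reloadLeft_left c ▸ hcol, hN⟩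
  · convert hx using 1 <;> first | rfl | ring
  · convert hx' using 1 <;> ring

theorem coarse_step_right (L : Level back W q D T N) {e : Instr} (he : e ≠ .idle)
    {b c : Address} {p' : P} (hb : W s t p (⟨false, 211, true, e⟩, b))
    (hc : W (s + D) t p' (⟨true, 211, true, e⟩, c)) :
    b.dir = true ∧ ∃ σ ρ ρ' p'', coarse W D (s - 196 * q) (t - 212 * T) (back^[212] p) σ ∧
      coarse W D (s - 196 * q - (2 * D + 8 * q)) (t - 212 * T) p'' ρ ∧
      Collision ρ σ ρ' (b.reloadLeft c, c) ∧
      coarseNeighbour back W N p'' (back^[212] p) := by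
  have hb12 := L.run_end_twelve (s' := s - 199 * q) hb (by simp; ring) rfl
  obtain ⟨z, y, p₁, hy, hz, rfl⟩ := L.before_swapBack_right he hb12
  obtain ⟨A, y', z', c', x, x', r, _, p₂, hcol, hAz, -, hdz, hex, hx, hx', hN, -, -, hy', hz'⟩ :=
    L.collision_before_swapBack he hz (p' := back (back^[199] p)) (by convert hy using 1; ring)
  have hc8 := L.run_end_eight (s' := s + D - 195 * q) hc (.inr rfl) (by simp; ring) rfl
  obtain ⟨y₁, z₁, _, _, hz₁, hy₁, hex'⟩ := L.before_execute_right hc8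
  rw [Address.instr_clock_eight, if_neg he, if_pos rfl] at hex'
  rw [show s + D - 195 * q - q - D = s - 199 * q - q - D + D + 4 * q by ring,
    show t - 203 * T - T = t - 199 * T - T - 4 * T by ring] at hy₁
  rw [show s + D - 195 * q - q = s - 199 * q - q - D + D + 4 * q + D by ring,
    show t - 203 * T - T = t - 199 * T - T - 4 * T by ring] at hz₁
  obtain rfl : y₁ = y' := (Prod.mk.inj (L.unique hy₁ hy' rfl).1).2
  obtain rfl : z₁ = z' := (Prod.mk.inj (L.unique hz₁ hz' rfl).1).2
  obtain ⟨rfl, rfl⟩ := Prod.mk.inj (Option.some.inj (hex.symm.trans hex'))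
  refine ⟨by simpa using hdz, _, _, _, _, ?_, ?_,
    (hAz.reloadLeft_reload_right y c').symm ▸ hcol, hN⟩
  · convert hx' using 1 <;> first | rfl | ring
  · convert hx using 1 <;> ring

theorem next (L : Level back W q D T N) : Level (back^[212]) (coarse W D) (196 * q)
    (2 * D + 8 * q) (212 * T) (coarseNeighbour back W N) where
  unique := by
    rintro s t p p' _ _ ⟨b, c, d, e, _, hb, hc, rfl⟩ ⟨b', c', d', e', _, hb', hc', rfl⟩ _
    obtain ⟨hσ, rfl⟩ := L.unique hb hb' (by simp [Address.dir])
    obtain rfl : b = b' := (Prod.mk.inj hσ).2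
    obtain rfl : c = c' := (Prod.mk.inj (L.unique hc hc' (by simp [Address.dir])).1).2
    exact ⟨rfl, rfl⟩
  step := by
    rintro s t p _ ⟨b, c, d, e, p', hb, hc, rfl⟩
    rw [Address.dir_reloadLeft]
    by_cases he : e = .idle
    · subst he
      obtain ⟨rfl, σ, h⟩ := L.coarse_step_idle hb hc
      exact ⟨σ, h.1, .inl h.2⟩
    cases d with
    | false =>
      obtain ⟨hd, σ, ρ, ρ', p'', hσ, hρ, h⟩ := L.coarse_step_left he hb hc
      rw [hd, show s - 196 * q * dirSign false = s + 196 * q by simp]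
      exact ⟨σ, hσ, .inr (.inl ⟨ρ, ρ', p'', hρ, h⟩)⟩
    | true =>
      obtain ⟨hd, σ, ρ, ρ', p'', hσ, hρ, h⟩ := L.coarse_step_right he hb hc
      rw [hd, show s - 196 * q * dirSign true = s - 196 * q by simp]
      exact ⟨σ, hσ, .inr (.inr ⟨ρ, ρ', p'', hρ, h⟩)⟩

end Level

/-! ### Space-time diagrams -/

/-- A cell of the cellular automaton: the particle that leaves it to the left and the particle that
leaves it to the right. -/
abbrev Cell := Option State × Option State

/-- The particle leaving the cell in direction `d`. A particle stored on the wrong side does not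
leave at all. -/
def Cell.moving (d : Bool) (c : Cell) : Option State :=
  (if d then c.2 else c.1).filter fun σ => σ.1.dir = d

open Classical in
/-- The particle `σ` after a step in which it does not collide. -/
noncomputable def State.solo (σ : State) : Option State :=
  if σ.1.Due then none else some σ.tick

/-- The local rule, applied to the particle arriving from the left and the one arriving from the
right. A lone particle is stored on both sides of the cell and leaves from one of them. -/
noncomputable def interact : Option State → Option State → Cell
  | none, none => (none, none)
  | some σ, none => (σ.solo, σ.solo)
  | none, some σ => (σ.solo, σ.solo)
  | some l, some r =>
    match collide l r with
    | some (l', r') => (some l', some r')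
    | none => (l.solo, r.solo)

theorem State.solo_eq_some_iff {σ σ' : State} :
    σ.solo = some σ' ↔ ¬ σ.1.Due ∧ σ' = σ.tick := by
  by_cases h : σ.1.Due <;> simp [State.solo, h, eq_comm]

theorem Cell.moving_eq_some_iff {d : Bool} {c : Cell} {σ : State} :
    c.moving d = some σ ↔ (if d then c.2 else c.1) = some σ ∧ σ.1.dir = d := by
  simp [Cell.moving, Option.filter_eq_some_iff]

theorem eq_tick_of_moving_interact {d : Bool} {σ σ' : State} {u v : Option State}
    (huv : u = some σ ∧ v = none ∨ u = none ∧ v = some σ)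
    (h : (interact u v).moving d = some σ') : ¬ σ.1.Due ∧ σ' = σ.tick := by
  rw [← State.solo_eq_some_iff]
  have h := (Cell.moving_eq_some_iff.1 h).1
  rcases huv with ⟨rfl, rfl⟩ | ⟨rfl, rfl⟩ <;> simpa [interact] using h

theorem moving_interact_cases {d : Bool} {l r σ' : State}
    (h : (interact (some l) (some r)).moving d = some σ') :
    (¬ (if d then r else l).1.Due ∧ σ' = (if d then r else l).tick) ∨
      (d = false ∧ ∃ r', Collision l r σ' r') ∨ (d = true ∧ ∃ l', Collision l r l' σ') := by
  have h := (Cell.moving_eq_some_iff.1 h).1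
  rw [interact] at h
  rcases hc : collide l r with _ | ⟨l', r'⟩ <;> rw [hc] at h
  · left
    rw [← State.solo_eq_some_iff]
    cases d <;> simpa using h
  · right
    rw [collide_eq_some_iff] at hc
    cases d <;> simp only [Bool.false_eq_true, if_true, if_false, Option.some.injEq] at h <;>
      subst h
    · exact .inl ⟨rfl, r', hc⟩
    · exact .inr ⟨rfl, l', hc⟩

theorem isSome_of_moving_interact {u v : Option State}
    (hl : (interact u v).moving false ≠ none) (hr : (interact u v).moving true ≠ none) :
    u.isSome ∧ v.isSome := by
  obtain ⟨σ, hl⟩ := Option.ne_none_iff_exists'.1 hl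
  obtain ⟨σ', hr⟩ := Option.ne_none_iff_exists'.1 hr
  obtain ⟨hl, hd⟩ := Cell.moving_eq_some_iff.1 hl
  obtain ⟨hr, hd'⟩ := Cell.moving_eq_some_iff.1 hr
  rcases u with _ | l <;> rcases v with _ | r <;> simp_all [interact]

/-- A possible arrival of a particle: at time `time` at column `column`, moving in direction `dir`,
hence coming from the left if `dir = true`. -/
@[ext] structure Point where
  time : ℤ
  column : ℤ
  dir : Bool
  deriving DecidableEq, Inhabited

/-- The position of an arrival in the order of space; arrivals from the left come before those from
the right. -/
def Point.key (p : Point) : ℤ := 2 * p.column + if p.dir then 0 else 1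

/-- `p` and `p'` are arrivals from the left and from the right at the same place and time. -/
def Meeting (p p' : Point) : Prop := ∃ t c, p = ⟨t, c, true⟩ ∧ p' = ⟨t, c, false⟩

theorem Point.eq_of_key_eq {p p' : Point} (ht : p.time = p'.time) (hk : p.key = p'.key) :
    p = p' := by
  obtain ⟨t, c, d⟩ := p
  obtain ⟨t', c', d'⟩ := p'
  simp only [key, Point.mk.injEq] at *
  cases d <;> cases d' <;> simp at hk ⊢ <;> omega

theorem Meeting.key_eq {p p' : Point} (h : Meeting p p') :
    p.time = p'.time ∧ p'.key = p.key + 1 := by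
  obtain ⟨t, c, rfl, rfl⟩ := h
  simp [Point.key]

/-- A two-sided space-time diagram of the local rule, given by its arrivals. At each time the
particles occur only at every other column. -/
structure IsDiagram (w : Point → Option State) : Prop where
  rule : ∀ t c d, w ⟨t, c, d⟩ =
    (interact (w ⟨t - 1, c - dirSign d, true⟩) (w ⟨t - 1, c - dirSign d, false⟩)).moving d
  even : ∀ p p', w p ≠ none → w p' ≠ none → p.time = p'.time → Even (p.column - p'.column)

/-- The previous arrival of a particle. Two particles that arrive at the same column bounce off each
other. -/
def back (w : Point → Option State) (p : Point) : Point :=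
  ⟨p.time - 1, p.column - dirSign p.dir,
    if (w ⟨p.time - 1, p.column - dirSign p.dir, true⟩).isSome then
      if (w ⟨p.time - 1, p.column - dirSign p.dir, false⟩).isSome then !p.dir else true
    else false⟩

/-- The particles of a space-time diagram as the lowest level of the hierarchy. -/
def particleAt (w : Point → Option State) (s t : ℤ) (p : Point) (σ : State) : Prop :=
  w p = some σ ∧ p.column = s ∧ p.time = t

namespace IsDiagram

variable {w : Point → Option State} {p p' : Point}

theorem dir_eq (H : IsDiagram w) {σ : State} (h : w p = some σ) : σ.1.dir = p.dir := by
  rw [H.rule] at h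
  exact (Cell.moving_eq_some_iff.1 h).2

theorem exists_back (H : IsDiagram w) {σ' : State} (h : w p = some σ') :
    ∃ σ, w (back w p) = some σ ∧
      ((¬ σ.1.Due ∧ σ' = σ.tick) ∨
       (∃ ρ ρ' p', w p' = some ρ ∧ Collision σ ρ σ' ρ' ∧ Meeting (back w p) p') ∨
       (∃ ρ ρ' p', w p' = some ρ ∧ Collision ρ σ ρ' σ' ∧ Meeting p' (back w p))) := by
  rw [H.rule] at h
  rcases hu : w ⟨p.time - 1, p.column - dirSign p.dir, true⟩ with _ | l <;>
    rcases hv : w ⟨p.time - 1, p.column - dirSign p.dir, false⟩ with _ | r <;>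
    simp only [hu, hv] at h
  · simp [Cell.moving, interact] at h
  · exact ⟨r, by simp [back, hu, hv], .inl (eq_tick_of_moving_interact (by simp) h)⟩
  · exact ⟨l, by simp [back, hu, hv], .inl (eq_tick_of_moving_interact (by simp) h)⟩
  · have hb : back w p = ⟨p.time - 1, p.column - dirSign p.dir, !p.dir⟩ := by
      simp [back, hu, hv]
    rw [hb]
    refine ⟨if p.dir then r else l, ?_, ?_⟩
    · cases hd : p.dir <;> rw [hd] at hu hv
      exacts [hu, hv]
    · rcases moving_interact_cases h with hs | ⟨hd, r', hc⟩ | ⟨hd, l', hc⟩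
      · exact .inl hs
      · rw [hd] at hv ⊢
        exact .inr (.inl ⟨r, r', _, hv, hc, _, _, rfl, rfl⟩)
      · rw [hd] at hu ⊢
        exact .inr (.inr ⟨l, l', _, hu, hc, _, _, rfl, rfl⟩)

theorem level (H : IsDiagram w) : Level (back w) (particleAt w) 1 0 1 Meeting where
  unique := by
    rintro s t p p' σ σ' ⟨hp, rfl, rfl⟩ ⟨hp', hc, ht⟩ hd
    have : p = p' := Point.ext ht.symm hc.symm (by rw [← H.dir_eq hp, hd, H.dir_eq hp'])
    subst this
    exact ⟨Option.some.inj (hp.symm.trans hp'), rfl⟩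
  step := by
    rintro s t p σ' ⟨hp, rfl, rfl⟩
    rw [one_mul, H.dir_eq hp, add_zero, sub_zero]
    have place {p'} (h : Meeting (back w p) p' ∨ Meeting p' (back w p)) :
        p'.column = p.column - dirSign p.dir ∧ p'.time = p.time - 1 := by
      rcases h with ⟨t, c, h, rfl⟩ | ⟨t, c, rfl, h⟩ <;> simp_all [back]
    obtain ⟨σ, hσ, h⟩ := H.exists_back hp
    refine ⟨σ, ⟨hσ, rfl, rfl⟩, h.imp_right (.imp ?_ ?_)⟩
    · rintro ⟨ρ, ρ', p', hρ, hc, hm⟩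
      exact ⟨ρ, ρ', p', ⟨hρ, place (.inl hm)⟩, hc, hm⟩
    · rintro ⟨ρ, ρ', p', hρ, hc, hm⟩
      exact ⟨ρ, ρ', p', ⟨hρ, place (.inr hm)⟩, hc, hm⟩

theorem back_ne_none (H : IsDiagram w) (h : w p ≠ none) : w (back w p) ≠ none := by
  obtain ⟨σ', h⟩ := Option.ne_none_iff_exists'.1 h
  obtain ⟨σ, hσ, -⟩ := H.exists_back h
  simp [hσ]

theorem key_back_lt (H : IsDiagram w) (h : w p ≠ none) (h' : w p' ≠ none)
    (ht : p.time = p'.time) (hlt : p.key < p'.key) : (back w p).key < (back w p').key := by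
  obtain ⟨k, hk⟩ := H.even p p' h h' ht
  obtain ⟨t, c, d⟩ := p
  obtain ⟨t', c', d'⟩ := p'
  simp only [Point.key] at *
  subst ht
  by_cases hfar : c - dirSign d < c' - dirSign d'
  · simp only [back]
    split_ifs <;> omega
  · obtain ⟨rfl, rfl, rfl⟩ : d = false ∧ d' = true ∧ c' = c + 2 := by
      cases d <;> cases d' <;> simp at hlt hfar ⊢ <;> omega
    rw [H.rule] at h h'
    have hc : c + 2 - 1 = c + 1 := by ring
    simp only [dirSign_true, dirSign_false, sub_neg_eq_add, hc] at h h'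
    obtain ⟨hl, hr⟩ := isSome_of_moving_interact h h'
    simp [back, hc, hl, hr]

theorem iterate_back_ne_none (H : IsDiagram w) (k : ℕ) (h : w p ≠ none) :
    w ((back w)^[k] p) ≠ none := by
  induction k with
  | zero => exact h
  | succ k ih =>
    rw [Function.iterate_succ_apply']
    exact H.back_ne_none ih

end IsDiagram

theorem time_iterate_back (w : Point → Option State) (k : ℕ) (p : Point) :
    ((back w)^[k] p).time = p.time - k := by
  induction k with
  | zero => simp
  | succ k ih =>
    rw [Function.iterate_succ_apply']
    simp only [back, ih]
    push_cast
    ring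

namespace IsDiagram

variable {w : Point → Option State} {p p' : Point}

theorem key_iterate_back_lt (H : IsDiagram w) (k : ℕ) (h : w p ≠ none) (h' : w p' ≠ none)
    (ht : p.time = p'.time) (hlt : p.key < p'.key) :
    ((back w)^[k] p).key < ((back w)^[k] p').key := by
  induction k with
  | zero => exact hlt
  | succ k ih =>
    simp only [Function.iterate_succ_apply']
    refine H.key_back_lt (H.iterate_back_ne_none k h) (H.iterate_back_ne_none k h') ?_ ih
    rw [time_iterate_back, time_iterate_back, ht]

theorem key_iterate_back_lt_iff (H : IsDiagram w) (k : ℕ) (h : w p ≠ none) (h' : w p' ≠ none)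
    (ht : p.time = p'.time) :
    ((back w)^[k] p).key < ((back w)^[k] p').key ↔ p.key < p'.key := by
  refine ⟨fun hk => ?_, H.key_iterate_back_lt k h h' ht⟩
  by_contra! hle
  rcases hle.lt_or_eq with hlt | heq
  · exact hk.not_gt (H.key_iterate_back_lt k h' h ht.symm hlt)
  · rw [Point.eq_of_key_eq ht heq.symm] at hk
    exact hk.false

theorem iterate_back_inj (H : IsDiagram w) (k : ℕ) (h : w p ≠ none) (h' : w p' ≠ none)
    (ht : p.time = p'.time) (hk : (back w)^[k] p = (back w)^[k] p') : p = p' := by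
  have hlt := H.key_iterate_back_lt_iff k h h' ht
  have hgt := H.key_iterate_back_lt_iff k h' h ht.symm
  rw [hk] at hlt hgt
  exact Point.eq_of_key_eq ht (by omega)

theorem injOn_iterate_back (H : IsDiagram w) (k : ℕ) {Z : Set Point} {t : ℤ}
    (hZ : ∀ z ∈ Z, w z ≠ none ∧ z.time = t) : Set.InjOn (back w)^[k] Z := fun z hz z' hz' =>
  H.iterate_back_inj k (hZ z hz).1 (hZ z' hz').1 ((hZ z hz).2.trans (hZ z' hz').2.symm)

end IsDiagram

/-! ### Separation of the particles of a level -/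

section Separation

/-- The distance of the members of the pairs of level `n`. -/
def gap : ℕ → ℤ
  | 0 => 0
  | n + 1 => 2 * gap n + 8 * 196 ^ n

/-- The particles of level `n` of a space-time diagram. One step of level `n` takes time `212 ^ n`
and moves a particle by `196 ^ n`. -/
def particle (w : Point → Option State) : ℕ → ℤ → ℤ → Point → State → Prop
  | 0 => particleAt w
  | n + 1 => coarse (particle w n) (gap n)

/-- The relation between the points of two colliding particles of level `n`. -/
def neighbour (w : Point → Option State) : ℕ → Point → Point → Prop
  | 0 => Meeting
  | n + 1 => coarseNeighbour (back w)^[212 ^ n] (particle w n) (neighbour w n)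

/-- The time after which the particles between two colliding particles of level `n` have thinned
out to at most `2 ^ n`. -/
def delay : ℕ → ℕ
  | 0 => 0
  | n + 1 => delay n + 4 * 212 ^ n

theorem gap_nonneg (n : ℕ) : 0 ≤ gap n := by
  induction n with
  | zero => simp [gap]
  | succ n ih =>
    rw [gap]
    positivity

theorem gap_le (n : ℕ) : gap n ≤ 196 ^ n := by
  induction n with
  | zero => simp [gap]
  | succ n ih =>
    rw [gap, pow_succ]
    have : (0 : ℤ) ≤ 196 ^ n := by positivity
    linarith

theorem delay_le (n : ℕ) : delay n ≤ 212 ^ n := by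
  induction n with
  | zero => simp [delay]
  | succ n ih =>
    rw [delay, pow_succ]
    omega

variable {w : Point → Option State} {n : ℕ} {s t : ℤ} {p p' : Point} {σ : State}

theorem particleAt_of_particle (h : particle w n s t p σ) : ∃ σ, particleAt w s t p σ := by
  induction n generalizing σ with
  | zero => exact ⟨σ, h⟩
  | succ n ih =>
    obtain ⟨b, c, d, e, p', h, -⟩ := h
    exact ih h

theorem ne_none_of_particle (h : particle w n s t p σ) : w p ≠ none := by
  obtain ⟨σ, h, -⟩ := particleAt_of_particle h
  simp [h]

theorem column_of_particle (h : particle w n s t p σ) : p.column = s := by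
  obtain ⟨σ, -, h, -⟩ := particleAt_of_particle h
  exact h

theorem time_of_particle (h : particle w n s t p σ) : p.time = t := by
  obtain ⟨σ, -, -, h⟩ := particleAt_of_particle h
  exact h

theorem time_eq_of_neighbour (h : neighbour w n p p') : p.time = p'.time := by
  induction n generalizing p p' with
  | zero => exact h.key_eq.1
  | succ n ih =>
    obtain ⟨r, r', h, hr, rfl, -⟩ := h
    rw [ih h, ← Function.iterate_mul, time_iterate_back, time_iterate_back, ih hr]

theorem abs_sub_offset_le (r d : Bool) {k : ℕ} (hk : k ≤ 212) :
    |196 * dirSign d - offset r d k| ≤ 200 := by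
  rw [abs_le]
  unfold offset
  cases r <;> cases d <;> simp only [dirSign_true, dirSign_false] <;> split_ifs <;>
    constructor <;> omega

namespace IsDiagram

theorem level_particle (H : IsDiagram w) (n : ℕ) :
    Level (back w)^[212 ^ n] (particle w n) (196 ^ n) (gap n) (212 ^ n) (neighbour w n) := by
  induction n with
  | zero => exact H.level
  | succ n ih =>
    simpa only [particle, neighbour, gap, pow_succ', mul_comm 212, Function.iterate_mul]
      using ih.next

theorem particle_unique (H : IsDiagram w) {s' t' : ℤ} {σ' : State} (h : particle w n s t p σ)
    (h' : particle w n s' t' p σ') : σ = σ' := by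
  obtain rfl := (column_of_particle h).symm.trans (column_of_particle h')
  obtain rfl := (time_of_particle h).symm.trans (time_of_particle h')
  induction n generalizing σ σ' with
  | zero => exact Option.some.inj (h.1.symm.trans h'.1)
  | succ n ih =>
    obtain ⟨b, c, d, e, _, hb, hc, rfl⟩ := h
    obtain ⟨b', c', d', e', _, hb', hc', rfl⟩ := h'
    obtain ⟨-, rfl⟩ := Prod.mk.inj (ih hb hb')
    obtain rfl : c = c' :=
      (Prod.mk.inj ((H.level_particle n).unique hc hc' (by simp [Address.dir])).1).2
    rfl

theorem exists_particle_earlier (H : IsDiagram w) {r d : Bool} {k : Fin 212} {e : Instr}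
    {b : Address} (h : particle w n s t p (⟨r, k, d, e⟩, b)) (i j : ℕ) (hij : i + j = k) :
    ∃ b', particle w n (s - 196 ^ n * (offset r d (k + 1) - offset r d (i + 1)))
      (t - j * 212 ^ n) ((back w)^[j * 212 ^ n] p) (⟨r, ⟨i, by omega⟩, d, e⟩, b') := by
  obtain ⟨b', h, -⟩ := (H.level_particle n).run (j := ⟨i, by omega⟩) j h hij
  rw [← Function.iterate_mul, mul_comm (212 ^ n)] at h
  exact ⟨b', h⟩

/-- Two particles of one level that start from a common point are in phase. -/
theorem eq_zero_of_particle_iterate_back (H : IsDiagram w) {s' t' : ℤ} {σ' : State} {k : ℕ}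
    (h : particle w n s t p σ) (h' : particle w n s' t' ((back w)^[k] p) σ')
    (hk : k < 212 ^ n) : k = 0 := by
  induction n generalizing s t p σ s' t' σ' k with
  | zero => simpa using hk
  | succ n ih =>
    obtain ⟨b, -, d, e, -, h, -⟩ := h
    obtain ⟨b', -, d', e', -, h', -⟩ := h'
    have hT : 0 < 212 ^ n := by positivity
    have hlt : k / 212 ^ n < 212 := Nat.div_lt_of_lt_mul (by rwa [← pow_succ])
    obtain ⟨b'', h''⟩ := H.exists_particle_earlier h (211 - k / 212 ^ n) (k / 212 ^ n)
      (by change _ = 211; omega)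
    have hk := Nat.mod_add_div' k (212 ^ n)
    rw [← hk, Function.iterate_add_apply] at h'
    have hr := ih h'' h' (Nat.mod_lt _ hT)
    rw [hr] at h'
    have hclock : 211 - k / 212 ^ n = 211 := by
      simpa using congrArg (fun σ : State => σ.1.clock.val) (H.particle_unique h'' h')
    rw [← hk, hr, show k / 212 ^ n = 0 by omega, zero_mul, zero_add]

theorem abs_column_iterate_back_le (H : IsDiagram w) {k : ℕ} (h : particle w n s t p σ)
    (hk : k ≤ 212 ^ n) : |((back w)^[k] p).column - s| ≤ 2 * 196 ^ n := by
  induction n generalizing s t p σ k with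
  | zero =>
    obtain ⟨-, rfl, -⟩ := h
    rw [pow_zero] at hk
    interval_cases k
    · simp
    · cases hd : p.dir <;> simp [back, hd]
  | succ n ih =>
    obtain ⟨b, -, d, e, -, h, -⟩ := h
    have hT : 0 < 212 ^ n := by positivity
    obtain ⟨j, r, hj, hr, rfl⟩ : ∃ j r, j ≤ 211 ∧ r ≤ 212 ^ n ∧ r + j * 212 ^ n = k := by
      rw [pow_succ] at hk
      rcases hk.lt_or_eq with hk | rfl
      · have := Nat.div_lt_of_lt_mul hk
        exact ⟨k / 212 ^ n, k % 212 ^ n, by omega, (Nat.mod_lt _ hT).le, Nat.mod_add_div' ..⟩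
      · exact ⟨211, 212 ^ n, le_rfl, le_rfl, by ring⟩
    obtain ⟨b', h'⟩ := H.exists_particle_earlier h (211 - j) j (by change _ = 211; omega)
    have hcol := ih h' hr
    have hoff : |offset false d 212 - offset false d (211 - j + 1)| ≤ 200 := by
      rw [offset_end]
      exact abs_sub_offset_le _ _ (by omega)
    rw [← Function.iterate_add_apply] at hcol
    rw [abs_le] at *
    have hq : (0 : ℤ) < 196 ^ n := by positivity
    rw [pow_succ]
    change _ ≤ _ - (_ - _ * (offset false d 212 - _)) ∧ _ - (_ - _ * (offset false d 212 - _)) ≤ _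
      at hcol
    constructor <;> nlinarith

/-- Every particle descends from a particle of the next level: its pair was last refreshed at
clock `0`. -/
theorem exists_particle_succ (H : IsDiagram w) {r d : Bool} {k : Fin 212} {e : Instr}
    {b : Address} (h : particle w n s t p (⟨r, k, d, e⟩, b)) :
    ∃ p' σ', particle w (n + 1) (s - (if r then gap n else 0) - 196 ^ n * offset r d (k + 1))
      (t - (k + 1) * 212 ^ n) p' σ' := by
  obtain ⟨b', h₀⟩ := H.exists_particle_earlier h 0 k (by simp)
  rw [show t - (k + 1) * 212 ^ n = t - k * 212 ^ n - 212 ^ n by ring]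
  cases r with
  | false =>
    obtain ⟨d', e', A, c, p', hA, hc, -⟩ := (H.level_particle n).before_advance_left h₀
    have hs : s - 196 ^ n * (offset false d (k + 1) - offset false d (0 + 1)) + 196 ^ n =
        s - 0 - 196 ^ n * offset false d (k + 1) := by
      rw [show offset false d (0 + 1) = -1 by simp [offset]]
      ring
    rw [hs] at hA hc
    exact ⟨_, _, A, c, d', e', p', hA, hc, rfl⟩
  | true =>
    obtain ⟨d', e', A, p', hc, hA⟩ := (H.level_particle n).before_advance_right h₀
    have hs : s - 196 ^ n * (offset true d (k + 1) - offset true d (0 + 1)) - 196 ^ n =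
        s - gap n - 196 ^ n * offset true d (k + 1) + gap n := by
      rw [show offset true d (0 + 1) = 1 by simp [offset]]
      ring
    rw [hs] at hA hc
    rw [add_sub_cancel_right] at hA
    exact ⟨p', _, A, b', d', e', _, hA, hc, rfl⟩

theorem card_le_of_neighbour (H : IsDiagram w) (h : neighbour w n p p') (Z : Finset Point)
    (hZ : ∀ z ∈ Z, w z ≠ none ∧ z.time = p.time + delay n ∧
      p.key ≤ ((back w)^[delay n] z).key ∧ ((back w)^[delay n] z).key < p'.key) :
    Z.card ≤ 2 ^ n := by
  induction n generalizing p p' Z with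
  | zero =>
    refine Finset.card_le_one.2 fun z hz z' hz' => Point.eq_of_key_eq ?_ ?_
    · rw [(hZ z hz).2.1, (hZ z' hz').2.1]
    · have := h.key_eq.2
      have := (hZ z hz).2.2
      have := (hZ z' hz').2.2
      simp only [delay, Function.iterate_zero, id] at *
      omega
  | succ n ih =>
    obtain ⟨r, r', hpr, hrr', rfl, ⟨_, _, _, hr⟩, ⟨_, _, _, hr'⟩⟩ := h
    replace hr := ne_none_of_particle hr
    replace hr' := ne_none_of_particle hr'
    rw [← Function.iterate_mul, mul_comm _ 4] at hpr hZ
    have htr := time_eq_of_neighbour hpr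
    have hrr := time_eq_of_neighbour hrr'
    rw [time_iterate_back] at htr
    have hinj : Set.InjOn (back w)^[4 * 212 ^ n] Z :=
      H.injOn_iterate_back _ fun z hz => ⟨(hZ z hz).1, (hZ z hz).2.1⟩
    rw [pow_succ, mul_two, ← Finset.card_filter_add_card_filter_not
      (fun z => ((back w)^[delay (n + 1)] z).key < ((back w)^[4 * 212 ^ n] r).key)]
    refine add_le_add ?_ (ih hrr' _ fun z hz => ?_)
    · rw [← Finset.card_image_of_injOn (hinj.mono (Finset.coe_subset.2 (Finset.filter_subset ..)))]
      refine ih hpr _ fun y hy => ?_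
      simp only [Finset.mem_image, Finset.mem_filter] at hy
      obtain ⟨z, ⟨hz, hlt⟩, rfl⟩ := hy
      obtain ⟨hwz, htz, hle, -⟩ := hZ z hz
      rw [time_iterate_back, htz, ← Function.iterate_add_apply]
      refine ⟨H.iterate_back_ne_none _ hwz, ?_, hle, hlt⟩
      push_cast [delay]
      ring
    · rw [Finset.mem_filter] at hz
      obtain ⟨hwz, htz, -, hlt⟩ := hZ z hz.1
      have hz := hz.2
      rw [delay, add_comm, Function.iterate_add_apply] at hz hlt
      have hw := H.iterate_back_ne_none (delay n) hwz
      have ht : ((back w)^[delay n] z).time = r.time := by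
        rw [time_iterate_back, htz]
        push_cast [delay] at htr ⊢
        linarith
      refine ⟨hwz, ?_, ?_, ?_⟩
      · rw [← ht, time_iterate_back, sub_add_cancel]
      · rwa [H.key_iterate_back_lt_iff _ hw hr ht, not_lt] at hz
      · rwa [H.key_iterate_back_lt_iff _ hw hr' (ht.trans hrr)] at hlt

end IsDiagram

end Separation

/-! ### Counting visits -/

section Counting

open Finset

/-- The possible times at which an original particle can arrive at column `c` if it descends from a
particle of level `n` that is at position `s` at time `t`. -/
def arrivalTimes : ℕ → ℤ → ℤ → ℤ → Finset ℤ
  | 0, s, t, c => if s = c then {t} else ∅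
  | n + 1, s, t, c => univ.biUnion fun r : Bool => univ.biUnion fun d : Bool =>
      univ.biUnion fun k : Fin 212 =>
        arrivalTimes n (s + (if r then gap n else 0) + 196 ^ n * offset r d (k + 1))
          (t + (k + 1) * 212 ^ n) c

theorem abs_offset_le (r d : Bool) {k : ℕ} (hk : k ≤ 212) : |offset r d k| ≤ 200 := by
  rw [abs_le]
  unfold offset
  cases r <;> cases d <;> simp only [dirSign_true, dirSign_false] <;> split_ifs <;>
    constructor <;> omega

theorem abs_sub_le_of_mem_arrivalTimes {n : ℕ} {s t c x : ℤ} (h : x ∈ arrivalTimes n s t c) :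
    |c - s| ≤ 2 * 196 ^ n := by
  induction n generalizing s t with
  | zero =>
    rw [arrivalTimes] at h
    split_ifs at h with hs
    · simp [hs]
    · simp at h
  | succ n ih =>
    simp only [arrivalTimes, mem_biUnion, mem_univ, true_and] at h
    obtain ⟨r, d, k, h⟩ := h
    have h := ih h
    have hoff := abs_offset_le r d (k := k + 1) (by omega)
    have hq : (0 : ℤ) < 196 ^ n := by positivity
    have hgap : 0 ≤ (if r then gap n else 0) ∧ (if r then gap n else 0) ≤ 196 ^ n := by
      split_ifs
      exacts [⟨gap_nonneg n, gap_le n⟩, ⟨le_rfl, hq.le⟩]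
    rw [abs_le] at *
    rw [pow_succ]
    constructor <;> nlinarith

theorem card_offset_mem_Ico_le (r d : Bool) (y : ℤ) :
    #{k : Fin 212 | offset r d (k + 1) ∈ Ico y (y + 5)} ≤ 25 := by
  let leg (k : ℕ) : Fin 5 :=
    if k ≤ 4 then 0 else if k ≤ 8 then 1 else if k ≤ 12 then 2 else if k ≤ 208 then 3 else 4
  have offset_inj {j k : ℕ} (hl : leg j = leg k) (h : offset r d j = offset r d k) : j = k := by
    simp only [leg] at hl
    unfold offset at h
    cases r <;> cases d <;> simp only [dirSign_true, dirSign_false] at h <;> split_ifs at hl <;>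
      first | (exfalso; revert hl; decide) | (simp only [*] at h; split_ifs at h <;> omega)
  refine (card_le_card_of_injOn (t := univ ×ˢ Ico y (y + 5))
    (fun k : Fin 212 => (leg (k + 1), offset r d (k + 1))) ?_ ?_).trans_eq (by simp)
  · intro k hk
    simpa using hk
  · intro j _ k _ h
    obtain ⟨hl, h⟩ := Prod.mk.inj h
    exact Fin.ext (Nat.succ_injective (offset_inj hl h))

theorem card_biUnion_arrivalTimes_le {n N : ℕ} {s c : ℤ}
    (hN : ∀ s t, #(arrivalTimes n s t c) ≤ N) (r d : Bool) (t : Fin 212 → ℤ) :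
    #(univ.biUnion fun k : Fin 212 =>
      arrivalTimes n (s + 196 ^ n * offset r d (k + 1)) (t k) c) ≤ 25 * N := by
  set y := (c - s) / 196 ^ n - 2
  set F : Finset (Fin 212) := {k | offset r d (k + 1) ∈ Ico y (y + 5)}
  have hF {k : Fin 212} {x}
      (hx : x ∈ arrivalTimes n (s + 196 ^ n * offset r d (k + 1)) (t k) c) : k ∈ F := by
    have hq : (0 : ℤ) < 196 ^ n := by positivity
    have hnear := abs_le.1 (abs_sub_le_of_mem_arrivalTimes hx)
    have := Int.emod_add_mul_ediv (c - s) (196 ^ n)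
    have := Int.emod_nonneg (c - s) hq.ne'
    have := Int.emod_lt_of_pos (c - s) hq
    simp only [F, mem_filter, mem_univ, true_and, mem_Ico]
    constructor <;> by_contra! hlt <;> nlinarith
  calc _ ≤ #(F.biUnion fun k =>
          arrivalTimes n (s + 196 ^ n * offset r d (k + 1)) (t k) c) := by
        refine card_le_card fun x hx => ?_
        simp only [mem_biUnion, mem_univ, true_and] at hx ⊢
        exact hx.imp fun k hx => ⟨hF hx, hx⟩
    _ ≤ #F * N := card_biUnion_le_card_mul _ _ _ fun k _ => hN _ _
    _ ≤ 25 * N := Nat.mul_le_mul_right _ (card_offset_mem_Ico_le r d y)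

theorem card_arrivalTimes_le (n : ℕ) (s t c : ℤ) : #(arrivalTimes n s t c) ≤ 100 ^ n := by
  induction n generalizing s t with
  | zero =>
    rw [arrivalTimes]
    split_ifs <;> simp
  | succ n ih =>
    calc #(arrivalTimes (n + 1) s t c) ≤ _ := card_biUnion_le_card_mul _ _ _ fun r _ =>
          card_biUnion_le_card_mul _ _ _ fun d _ =>
            card_biUnion_arrivalTimes_le (fun s t => ih s t) r d _
      _ = 100 ^ (n + 1) := by
        simp only [card_univ, Fintype.card_bool]
        ring

variable {w : Point → Option State} {n : ℕ} {s t : ℤ} {p : Point} {σ : State}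

/-- The particle `p` at the time `t`, which must not be later than that of `p`. -/
def ancestor (w : Point → Option State) (t : ℤ) (p : Point) : Point :=
  (back w)^[(p.time - t).toNat] p

theorem time_ancestor (h : t ≤ p.time) : (ancestor w t p).time = t := by
  rw [ancestor, time_iterate_back]
  omega

theorem ancestor_ancestor {u : ℤ} (hu : u ≤ t) (ht : t ≤ p.time) :
    ancestor w u (ancestor w t p) = ancestor w u p := by
  rw [ancestor, time_ancestor ht, ancestor, ancestor, ← Function.iterate_add_apply]
  congr
  omega

theorem iterate_back_eq_ancestor (w : Point → Option State) (k : ℕ) (p : Point) :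
    (back w)^[k] p = ancestor w (p.time - k) p := by
  simp [ancestor]

namespace IsDiagram

theorem ancestor_ne_none (H : IsDiagram w) (h : w p ≠ none) : w (ancestor w t p) ≠ none :=
  H.iterate_back_ne_none _ h

theorem ancestor_inj (H : IsDiagram w) {p' : Point} (h : w p ≠ none) (h' : w p' ≠ none)
    (ht : p.time = p'.time) (hp : ancestor w t p = ancestor w t p') : p = p' := by
  rw [ancestor, ancestor, ← ht] at hp
  exact H.iterate_back_inj _ h h' ht hp

theorem key_ancestor_lt_iff (H : IsDiagram w) {p' : Point} (h : w p ≠ none) (h' : w p' ≠ none)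
    (ht : p.time = p'.time) : (ancestor w t p).key < (ancestor w t p').key ↔ p.key < p'.key := by
  rw [ancestor, ancestor, ← ht]
  exact H.key_iterate_back_lt_iff _ h h' ht

theorem exists_mem_arrivalTimes (H : IsDiagram w) (h : w p ≠ none) (n : ℕ) :
    ∃ s t p' σ, particle w n s t p' σ ∧ p.time ∈ arrivalTimes n s t p.column ∧
      p.time - 2 * 212 ^ n ≤ t ∧ t ≤ p.time := by
  induction n with
  | zero =>
    obtain ⟨σ, h⟩ := Option.ne_none_iff_exists'.1 h
    exact ⟨p.column, p.time, p, σ, ⟨h, rfl, rfl⟩, by simp [arrivalTimes], by simp, le_rfl⟩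
  | succ n ih =>
    obtain ⟨s, t, p', ⟨⟨r, k, d, e⟩, b⟩, hp', harr, hlo, hhi⟩ := ih
    obtain ⟨p'', σ', hp''⟩ := H.exists_particle_succ hp'
    refine ⟨_, _, p'', σ', hp'', ?_, ?_, ?_⟩
    · simp only [arrivalTimes, mem_biUnion, mem_univ, true_and]
      refine ⟨r, d, k, ?_⟩
      convert harr using 2 <;> ring
    · have : ((k : ℤ) + 1) * 212 ^ n ≤ 212 * 212 ^ n := by gcongr; omega
      rw [pow_succ]
      linarith
    · have : 0 ≤ ((k : ℤ) + 1) * 212 ^ n := by positivity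
      linarith

theorem abs_column_ancestor_le (H : IsDiagram w) {r d : Bool} {e : Instr} {b : Address}
    (h : particle w n s t p (⟨r, 211, d, e⟩, b)) {j i : ℕ} (hj : j ≤ 211) (hi : i ≤ 212 ^ n) :
    |(ancestor w (t - j * 212 ^ n - i) p).column -
      (s - 196 ^ n * (offset r d 212 - offset r d (212 - j)))| ≤ 2 * 196 ^ n := by
  obtain ⟨b', h'⟩ := H.exists_particle_earlier h (211 - j) j (by change _ = 211; omega)
  have hcol := H.abs_column_iterate_back_le h' hi
  rw [← Function.iterate_add_apply, iterate_back_eq_ancestor, time_of_particle h,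
    show 211 - j + 1 = 212 - j by omega] at hcol
  rwa [show t - j * 212 ^ n - i = t - ((i + j * 212 ^ n : ℕ) : ℤ) by push_cast; ring]

theorem column_ancestor_add_le (H : IsDiagram w) {p' : Point} {d : Bool} {e e' : Instr}
    {b c : Address} (h : particle w n s t p (⟨false, 211, d, e⟩, b))
    (h' : particle w n (s + gap n) t p' (⟨true, 211, d, e'⟩, c)) {u : ℤ}
    (hu : t - 61 * 212 ^ n ≤ u) (hu' : u ≤ t - 8 * 212 ^ n) :
    (ancestor w u p).column + 4 * 196 ^ n ≤ (ancestor w u p').column := by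
  have hT : (0 : ℤ) < 212 ^ n := by positivity
  obtain ⟨j, i, hj, hj', hi, rfl⟩ : ∃ j i : ℕ, 8 ≤ j ∧ j ≤ 61 ∧ i ≤ 212 ^ n ∧
      t - j * 212 ^ n - i = u := by
    have hle := Int.le_ediv_of_mul_le hT (show 8 * 212 ^ n ≤ t - u by linarith)
    have hle' := Int.ediv_le_of_le_mul hT (show t - u ≤ 61 * 212 ^ n by linarith)
    have hmod := Int.emod_lt_of_pos (t - u) hT
    have hmod' := Int.emod_nonneg (t - u) hT.ne'
    have hsum := Int.emod_add_mul_ediv (t - u) (212 ^ n)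
    lift (t - u) / 212 ^ n to ℕ using (by omega) with j
    lift (t - u) % 212 ^ n to ℕ using hmod' with i
    exact ⟨j, i, by omega, by omega, by exact_mod_cast hmod.le, by linarith⟩
  have hp := abs_le.1 (H.abs_column_ancestor_le h (j := j) (by omega) hi)
  have hp' := abs_le.1 (H.abs_column_ancestor_le h' (j := j) (by omega) hi)
  have hoff : offset true d (212 - j) = offset false d (212 - j) + 8 := by
    simp only [offset, dirSign_true, dirSign_false]
    split_ifs <;> omega
  rw [offset_end, hoff] at hp'
  rw [offset_end] at hp
  have := gap_nonneg n
  linarith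

/-- The other member of the pair that represents a particle of level `n + 1`. At its last advance
the pair came out of a collision, and later its members travelled far apart. -/
theorem exists_partner (H : IsDiagram w) (h : particle w (n + 1) s t p σ) :
    ∃ p', w p' ≠ none ∧ p'.time = t ∧
      neighbour w n (ancestor w (t - 212 ^ (n + 1)) p) (ancestor w (t - 212 ^ (n + 1)) p') ∧
      ∀ u, t - 61 * 212 ^ n ≤ u → u ≤ t - 8 * 212 ^ n →
        (ancestor w u p).column + 4 * 196 ^ n ≤ (ancestor w u p').column := by
  obtain ⟨b, c, d, e, p', hb, hc, -⟩ := h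
  have hp := time_of_particle hb
  have hp' := time_of_particle hc
  refine ⟨p', ne_none_of_particle hc, hp', ?_, fun u => H.column_ancestor_add_le hb hc⟩
  obtain ⟨b₀, hb₀⟩ := H.exists_particle_earlier hb 0 211 rfl
  obtain ⟨c₀, hc₀⟩ := H.exists_particle_earlier hc 0 211 rfl
  obtain ⟨-, -, -, -, -, hN⟩ := (H.level_particle n).coarse_of_advance hb₀ hc₀ (by
    simp [offset]; ring)
  rwa [← Function.iterate_add_apply, ← Function.iterate_add_apply, iterate_back_eq_ancestor,
    iterate_back_eq_ancestor, hp, hp', show 212 ^ n + 211 * 212 ^ n = 212 ^ (n + 1) by ring,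
    Nat.cast_pow] at hN

theorem card_le_of_close (H : IsDiagram w) (h : particle w (n + 1) s t p σ) {u : ℤ}
    (hu : t - 61 * 212 ^ n ≤ u) (hu' : u ≤ t - 8 * 212 ^ n) (Z : Finset Point)
    (hZ : ∀ z ∈ Z, w z ≠ none ∧ z.time = u ∧ (ancestor w u p).key ≤ z.key ∧
      z.column < (ancestor w u p).column + 4 * 196 ^ n) :
    #Z ≤ 2 ^ n := by
  obtain ⟨p', hwp', htp', hN, hfar⟩ := H.exists_partner h
  have htp := time_of_particle h
  have hT : (0 : ℤ) < 212 ^ n := by positivity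
  have hdelay : (delay n : ℤ) ≤ 212 ^ n := by exact_mod_cast delay_le n
  set v := t - 212 ^ (n + 1) with hv
  have hvu : v + delay n ≤ u := by
    rw [hv, pow_succ]
    linarith
  rw [← card_image_of_injOn (f := ancestor w (v + delay n))]
  · refine H.card_le_of_neighbour hN _ fun y hy => ?_
    obtain ⟨z, hz, rfl⟩ := mem_image.1 hy
    obtain ⟨hwz, rfl, hle, hlt⟩ := hZ z hz
    rw [iterate_back_eq_ancestor, time_ancestor hvu, time_ancestor (by omega), add_sub_cancel_right,
      ancestor_ancestor (by omega) hvu]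
    refine ⟨H.ancestor_ne_none hwz, rfl, ?_, ?_⟩
    · rw [← ancestor_ancestor (p := p) (t := z.time) (by omega) (by omega), ← not_lt,
        H.key_ancestor_lt_iff hwz (H.ancestor_ne_none (ne_none_of_particle h))
          (time_ancestor (by omega)).symm, not_lt]
      exact hle
    · rw [← ancestor_ancestor (p := p') (t := z.time) (by omega) (by omega),
        H.key_ancestor_lt_iff hwz (H.ancestor_ne_none hwp') (time_ancestor (by omega)).symm]
      have := hfar _ hu hu'
      simp only [Point.key]
      split_ifs <;> omega
  · intro z hz z' hz' heq
    obtain ⟨hwz, htz, -⟩ := hZ z hz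
    obtain ⟨hwz', htz', -⟩ := hZ z' hz'
    exact H.ancestor_inj hwz hwz' (htz.trans htz'.symm) heq

theorem ancestor_inj_of_particle (H : IsDiagram w) {s' t' : ℤ} {p' : Point} {σ' : State} {u : ℤ}
    (h : particle w n s t p σ) (h' : particle w n s' t' p' σ') (hu : u ≤ t)
    (htt' : t ≤ t') (ht' : t' < t + 212 ^ n) (heq : ancestor w u p = ancestor w u p') :
    p = p' := by
  obtain rfl := time_of_particle h
  obtain rfl := time_of_particle h'
  have hp : p = ancestor w p.time p' := by
    refine H.ancestor_inj (t := u) (ne_none_of_particle h)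
      (H.ancestor_ne_none (ne_none_of_particle h')) (time_ancestor htt').symm ?_
    rw [ancestor_ancestor hu htt', heq]
  rw [hp, ancestor] at h
  have hk := H.eq_zero_of_particle_iterate_back h' h (by
    zify
    omega)
  rw [hp, ancestor, hk, Function.iterate_zero_apply]

theorem card_image_ancestor_le (H : IsDiagram w) (n : ℕ) (c u : ℤ) (K : Finset Point)
    (hK : ∀ p ∈ K, (∃ s t σ, particle w (n + 1) s t p σ) ∧ |c - p.column| ≤ 2 * 196 ^ (n + 1) ∧
      p.time - 61 * 212 ^ n ≤ u ∧ u ≤ p.time - 8 * 212 ^ n) :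
    #(K.image (ancestor w u)) ≤ 2 ^ n * 393 := by
  have hq : (0 : ℤ) < 4 * 196 ^ n := by positivity
  have hT : (0 : ℤ) < 212 ^ n := by positivity
  let block (z : Point) : ℤ := (z.column - c + 784 * 196 ^ n) / (4 * 196 ^ n)
  have hblock : ∀ z ∈ K.image (ancestor w u), block z ∈ Ico (0 : ℤ) 393 := by
    intro z hz
    obtain ⟨p, hp, rfl⟩ := mem_image.1 hz
    obtain ⟨⟨s, t, σ, h⟩, hc, hlo, hhi⟩ := hK p hp
    have hcol := H.abs_column_iterate_back_le h (k := (p.time - u).toNat) (by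
      zify
      rw [Int.toNat_of_nonneg (by linarith), pow_succ]
      linarith)
    change |(ancestor w u p).column - s| ≤ _ at hcol
    rw [column_of_particle h] at hc
    rw [pow_succ, abs_le] at hcol hc
    exact mem_Ico.2 ⟨Int.ediv_nonneg (by linarith) hq.le, Int.ediv_lt_of_lt_mul hq (by linarith)⟩
  refine (card_le_mul_card_image_of_maps_to hblock (2 ^ n) fun b _ => ?_).trans (by simp)
  obtain hempty | hne := {z ∈ K.image (ancestor w u) | block z = b}.eq_empty_or_nonempty
  · simp [hempty]
  obtain ⟨y, hy, hmin⟩ := exists_min_image _ Point.key hne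
  obtain ⟨hyK, rfl⟩ := mem_filter.1 hy
  obtain ⟨p, hp, rfl⟩ := mem_image.1 hyK
  obtain ⟨⟨s, t, σ, h⟩, -, hlo, hhi⟩ := hK p hp
  rw [time_of_particle h] at hlo hhi
  refine H.card_le_of_close h hlo hhi _ fun z hz => ?_
  have hle := hmin z hz
  obtain ⟨hz, hzb⟩ := mem_filter.1 hz
  obtain ⟨p', hp', rfl⟩ := mem_image.1 hz
  obtain ⟨⟨s', t', σ', h'⟩, -, -, hhi'⟩ := hK p' hp'
  refine ⟨H.ancestor_ne_none (ne_none_of_particle h'), time_ancestor (by linarith), hle, ?_⟩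
  have hfloor := Int.mul_ediv_self_le
    (x := (ancestor w u p).column - c + 784 * 196 ^ n) hq.ne'
  have hceil := Int.lt_mul_ediv_self_add
    (x := (ancestor w u p').column - c + 784 * 196 ^ n) hq
  change _ < 4 * 196 ^ n * block _ + _ at hceil
  rw [hzb] at hceil
  linarith

theorem card_le_of_particle (H : IsDiagram w) (n : ℕ) (c t : ℤ) (K : Finset Point)
    (hK : ∀ p ∈ K, (∃ s t σ, particle w (n + 1) s t p σ) ∧
      |c - p.column| ≤ 2 * 196 ^ (n + 1) ∧ t ≤ p.time ∧ p.time < t + 53 * 212 ^ n) :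
    #K ≤ 2 ^ n * 393 := by
  have : (0 : ℤ) < 212 ^ n := by positivity
  rw [← card_image_of_injOn (f := ancestor w (t - 8 * 212 ^ n))]
  · refine H.card_image_ancestor_le n c _ K fun p hp => ?_
    obtain ⟨h, hc, hlo, hhi⟩ := hK p hp
    exact ⟨h, hc, by linarith, by linarith⟩
  · intro p hp p' hp' heq
    obtain ⟨⟨s, v, σ, h⟩, -, hlo, hhi⟩ := hK p hp
    obtain ⟨⟨s', v', σ', h'⟩, -, hlo', hhi'⟩ := hK p' hp'
    rw [time_of_particle h] at hlo hhi
    rw [time_of_particle h'] at hlo' hhi'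
    rcases le_total v v' with hle | hle
    · exact H.ancestor_inj_of_particle h h' (by omega) hle (by omega) heq
    · exact (H.ancestor_inj_of_particle h' h (by omega) hle (by omega) heq.symm).symm

theorem card_visits_le (H : IsDiagram w) (n : ℕ) (c u : ℤ) (U : Finset ℤ)
    (hU : ∀ t ∈ U, u ≤ t ∧ t < u + 53 * 212 ^ n ∧ ∃ d, w ⟨t, c, d⟩ ≠ none) :
    #U ≤ 9 * 393 * 2 ^ n * 100 ^ (n + 1) := by
  have (t) (ht : t ∈ U) : ∃ p, (∃ s t σ, particle w (n + 1) s t p σ) ∧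
      t ∈ arrivalTimes (n + 1) p.column p.time c ∧ t - 2 * 212 ^ (n + 1) ≤ p.time ∧
      p.time ≤ t := by
    obtain ⟨-, -, d, hd⟩ := hU t ht
    obtain ⟨s, t', p, σ, h, harr, hlo, hhi⟩ := H.exists_mem_arrivalTimes hd (n + 1)
    obtain rfl := column_of_particle h
    obtain rfl := time_of_particle h
    exact ⟨p, ⟨_, _, σ, h⟩, harr, hlo, hhi⟩
  choose! origin hpart harr hlo hhi using this
  set K := U.image origin
  have hT : (0 : ℤ) < 53 * 212 ^ n := by positivity
  let block (p : Point) : ℤ := (p.time - (u - 424 * 212 ^ n)) / (53 * 212 ^ n)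
  have hblock : ∀ p ∈ K, block p ∈ Ico (0 : ℤ) 9 := by
    intro p hp
    obtain ⟨t, ht, rfl⟩ := mem_image.1 hp
    obtain ⟨hut, htu, -⟩ := hU t ht
    have hlo := hlo t ht
    have hhi := hhi t ht
    rw [pow_succ] at hlo
    exact mem_Ico.2 ⟨Int.ediv_nonneg (by linarith) hT.le, Int.ediv_lt_of_lt_mul hT (by linarith)⟩
  have hK : #K ≤ 2 ^ n * 393 * 9 := by
    refine (card_le_mul_card_image_of_maps_to hblock (2 ^ n * 393) fun b _ => ?_).trans (by simp)
    refine H.card_le_of_particle n c (u - 424 * 212 ^ n + 53 * 212 ^ n * b) _ fun p hp => ?_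
    obtain ⟨hpK, rfl⟩ := mem_filter.1 hp
    obtain ⟨t, ht, rfl⟩ := mem_image.1 hpK
    have := Int.mul_ediv_self_le (x := (origin t).time - (u - 424 * 212 ^ n)) hT.ne'
    have := Int.lt_mul_ediv_self_add (x := (origin t).time - (u - 424 * 212 ^ n)) hT
    exact ⟨hpart t ht, abs_sub_le_of_mem_arrivalTimes (harr t ht), by linarith, by linarith⟩
  calc #U ≤ #(K.biUnion fun p => arrivalTimes (n + 1) p.column p.time c) :=
        card_le_card fun t ht => mem_biUnion.2 ⟨_, mem_image_of_mem _ ht, harr t ht⟩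
    _ ≤ #K * 100 ^ (n + 1) := card_biUnion_le_card_mul _ _ _ fun p _ => card_arrivalTimes_le ..
    _ ≤ 2 ^ n * 393 * 9 * 100 ^ (n + 1) := Nat.mul_le_mul_right _ hK
    _ = 9 * 393 * 2 ^ n * 100 ^ (n + 1) := by ring

end IsDiagram

end Counting

/-! ### Unique ergodicity from rare visits -/

section Dynamics

open Set

variable {X : Type*} {f : X → X}

theorem surjOn_iInter_range_iterate [TopologicalSpace X] [CompactSpace X] [T2Space X]
    (hf : Continuous f) : SurjOn f (⋂ k, range f^[k]) (⋂ k, range f^[k]) := by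
  intro x hx
  have hclosed (k : ℕ) : IsClosed (f ⁻¹' {x} ∩ range f^[k]) :=
    (isClosed_singleton.preimage hf).inter (isCompact_range (hf.iterate k)).isClosed
  have hanti (k : ℕ) : range f^[k + 1] ⊆ range f^[k] := by
    rw [Function.iterate_succ]
    exact range_comp_subset_range _ _
  have hne (k : ℕ) : (f ⁻¹' {x} ∩ range f^[k]).Nonempty := by
    obtain ⟨y, hy⟩ := mem_iInter.1 hx (k + 1)
    rw [Function.iterate_succ_apply'] at hy
    exact ⟨f^[k] y, hy, y, rfl⟩
  obtain ⟨y, hy⟩ := IsCompact.nonempty_iInter_of_sequence_nonempty_isCompact_isClosed _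
    (fun k => inter_subset_inter_right _ (hanti k)) hne (hclosed 0).isCompact hclosed
  rw [mem_iInter] at hy
  exact ⟨y, mem_iInter.2 fun k => (hy k).2, (hy 0).1⟩

theorem exists_orbit_of_surjOn {S : Set X} (hf : SurjOn f S S) {x : X} (hx : x ∈ S) :
    ∃ z : ℤ → X, z 0 = x ∧ ∀ t, z (t + 1) = f (z t) := by
  have : Nonempty X := ⟨x⟩
  let g := Function.invFunOn f S
  refine ⟨fun | .ofNat k => f^[k] x | .negSucc k => g^[k + 1] x, rfl, ?_⟩
  rintro (k | _ | k)
  · exact Function.iterate_succ_apply' f k x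
  · exact (hf.rightInvOn_invFunOn hx).symm
  · have hmem : g^[k + 1] x ∈ S := (hf.mapsTo_invFunOn.iterate (k + 1)) hx
    change g^[k + 1] x = f (g^[k + 2] x)
    rw [Function.iterate_succ_apply' g (k + 1)]
    exact (hf.rightInvOn_invFunOn hmem).symm

theorem apply_natCast_of_orbit {z : ℤ → X} (hz : ∀ t, z (t + 1) = f (z t)) (k : ℕ) :
    z k = f^[k] (z 0) := by
  induction k with
  | zero => rfl
  | succ k ih => rw [Nat.cast_succ, hz, ih, Function.iterate_succ_apply']

variable [MeasurableSpace X] {μ : Measure X} [IsProbabilityMeasure μ]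

theorem ae_mem_iInter_range_iterate [TopologicalSpace X] [CompactSpace X] [T2Space X]
    [BorelSpace X] (hf : Continuous f) (hμ : MeasurePreserving f μ μ) :
    ∀ᵐ x ∂μ, x ∈ ⋂ k, range f^[k] := by
  simp only [mem_iInter]
  refine ae_all_iff.2 fun k => ?_
  have hm := (isCompact_range (hf.iterate k)).isClosed.measurableSet
  change range f^[k] ∈ ae μ
  rw [mem_ae_iff_prob_eq_one hm, ← (hμ.iterate k).measure_preimage hm.nullMeasurableSet,
    preimage_range, measure_univ]

open Classical in
theorem mul_measureReal_le_of_visits (hμ : MeasurePreserving f μ μ) {A : Set X}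
    (hA : MeasurableSet A) {N C : ℕ}
    (hC : ∀ᵐ x ∂μ, ((Finset.range N).filter fun t : ℕ => f^[t] x ∈ A).card ≤ C) :
    N * μ.real A ≤ C := by
  have hvisit (t : ℕ) : ∫ x, (f^[t] ⁻¹' A).indicator (1 : X → ℝ) x ∂μ = μ.real A := by
    rw [integral_indicator_one ((hμ.iterate t).measurable hA), measureReal_def, measureReal_def,
      (hμ.iterate t).measure_preimage hA.nullMeasurableSet]
  calc N * μ.real A
      = ∫ x, ∑ t ∈ Finset.range N, (f^[t] ⁻¹' A).indicator (1 : X → ℝ) x ∂μ := by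
        rw [integral_finsetSum _ fun t _ => (integrable_const 1).indicator
          ((hμ.iterate t).measurable hA)]
        simp [hvisit]
    _ ≤ ∫ _, (C : ℝ) ∂μ := by
        refine integral_mono_ae (integrable_finsetSum _ fun t _ => (integrable_const 1).indicator
          ((hμ.iterate t).measurable hA)) (integrable_const _) ?_
        filter_upwards [hC] with x hx
        rw [Finset.card_filter] at hx
        simpa [indicator_apply] using (Nat.cast_le (α := ℝ)).2 hx
    _ = C := by simp

end Dynamics

section UniqueErgodicity

variable {ι α : Type*} [Countable ι] [MeasurableSpace α]

theorem eq_dirac_of_ae_apply_eq {μ : Measure (ι → α)} [IsProbabilityMeasure μ] {b : ι → α}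
    (h : ∀ i, ∀ᵐ x ∂μ, x i = b i) : μ = Measure.dirac b := by
  have hb : id =ᵐ[μ] fun _ => b := by
    filter_upwards [ae_all_iff.2 h] with x hx
    exact funext hx
  have : μ.map id = μ.map fun _ => b := Measure.map_congr hb
  rwa [Measure.map_id, Measure.map_const, measure_univ, one_smul] at this

open Classical in
/-- A fixed point `b` that every long orbit segment matches with frequency tending to `1` at each
coordinate carries the only invariant measure. Only orbits that extend to the past matter. -/
theorem existsUnique_invariant_of_visits [Finite α] [TopologicalSpace α] [DiscreteTopology α]
    [DiscreteMeasurableSpace α] {f : (ι → α) → ι → α} (hf : Continuous f) {b : ι → α}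
    (hb : f b = b) {N C : ℕ → ℕ} (hN : ∀ n, 0 < N n)
    (hNC : Filter.Tendsto (fun n => (C n / N n : ℝ)) Filter.atTop (nhds 0))
    (h : ∀ z : ℤ → ι → α, (∀ t, z (t + 1) = f (z t)) → ∀ n i,
      ((Finset.range (N n)).filter fun t : ℕ => z t i ≠ b i).card ≤ C n) :
    ∃! μ : Measure (ι → α), IsProbabilityMeasure μ ∧
      ∀ A : Set (ι → α), MeasurableSet A → μ (f ⁻¹' A) = μ A := by
  refine ⟨Measure.dirac b, ⟨inferInstance, fun A hA => ?_⟩, ?_⟩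
  · rw [Measure.dirac_apply' _ hA, Measure.dirac_apply' _ (hf.measurable hA)]
    simp [Set.indicator_apply, hb]
  · rintro μ ⟨_, hμ⟩
    have hμ : MeasurePreserving f μ μ :=
      ⟨hf.measurable, Measure.ext fun A hA => by rw [Measure.map_apply hf.measurable hA, hμ A hA]⟩
    refine eq_dirac_of_ae_apply_eq fun i => ?_
    have hmeas : MeasurableSet {x : ι → α | x i ≠ b i} :=
      (measurable_pi_apply i : Measurable fun x : ι → α => x i) (.of_discrete (s := {b i}ᶜ))
    have hvisit (n : ℕ) : μ.real {x | x i ≠ b i} ≤ C n / N n := by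
      rw [le_div_iff₀' (Nat.cast_pos.2 (hN n))]
      refine mul_measureReal_le_of_visits hμ hmeas ?_
      filter_upwards [ae_mem_iInter_range_iterate hf hμ] with x hx
      obtain ⟨z, rfl, hz⟩ := exists_orbit_of_surjOn (surjOn_iInter_range_iterate hf) hx
      convert h z hz n i using 4
      rw [apply_natCast_of_orbit hz]
    rw [ae_iff, ← measureReal_eq_zero_iff]
    exact (ge_of_tendsto' hNC hvisit).antisymm measureReal_nonneg

end UniqueErgodicity

/-! ### The automaton -/

/-- The cellular automaton on `ℤ → Cell`. -/
noncomputable def globalRule (x : ℤ → Cell) (i : ℤ) : Cell :=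
  interact ((x (i - 1)).moving true) ((x (i + 1)).moving false)

theorem globalRule_shift (x : ℤ → Cell) :
    globalRule (fun i => x (i + 1)) = fun i => globalRule x (i + 1) := by
  funext i
  rw [globalRule, globalRule, sub_add_cancel, add_sub_cancel_right]

theorem globalRule_blank : globalRule (fun _ => (none, none)) = fun _ => (none, none) := rfl

/-- The arrivals of the particles in a two-sided orbit `z`. Restricting to one residue of
`time + column + ε` mod `2` selects one of the two independent systems that `z` superposes. -/
def arrivals (z : ℤ → ℤ → Cell) (ε : ℤ) (p : Point) : Option State :=
  if Even (p.time + p.column + ε) then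
    (z (p.time - 1) (p.column - dirSign p.dir)).moving p.dir
  else none

section Orbit

variable {z : ℤ → ℤ → Cell} {ε : ℤ}

theorem even_of_arrivals_ne_none {p : Point} (h : arrivals z ε p ≠ none) :
    Even (p.time + p.column + ε) := by
  by_contra ho
  exact h (if_neg ho)

theorem interact_arrivals (hz : ∀ t, z (t + 1) = globalRule (z t)) {t c : ℤ}
    (h : Even (t + c + ε)) :
    interact (arrivals z ε ⟨t, c, true⟩) (arrivals z ε ⟨t, c, false⟩) = z t c := by
  rw [← sub_add_cancel t 1, hz, sub_add_cancel, arrivals, arrivals, if_pos h, if_pos h]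
  rfl

theorem even_pred_iff (t c : ℤ) (d : Bool) :
    Even (t - 1 + (c - dirSign d) + ε) ↔ Even (t + c + ε) := by
  cases d <;> simp only [dirSign_true, dirSign_false, Int.even_iff] <;> omega

theorem isDiagram_arrivals (hz : ∀ t, z (t + 1) = globalRule (z t)) :
    IsDiagram (arrivals z ε) where
  rule t c d := by
    by_cases h : Even (t + c + ε)
    · rw [interact_arrivals hz ((even_pred_iff t c d).2 h), arrivals, if_pos h]
    · have h' : ¬ Even (t - 1 + (c - dirSign d) + ε) := by rwa [even_pred_iff]
      simp only [arrivals, if_neg h, if_neg h']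
      cases d <;> rfl
  even p p' h h' ht := by
    have h := even_of_arrivals_ne_none h
    have h' := even_of_arrivals_ne_none h'
    rw [Int.even_iff] at *
    omega

theorem exists_arrivals_ne_none (hz : ∀ t, z (t + 1) = globalRule (z t)) {t c : ℤ}
    (h : Even (t + c + ε)) (hb : z t c ≠ (none, none)) : ∃ d, arrivals z ε ⟨t, c, d⟩ ≠ none := by
  contrapose! hb
  rw [← interact_arrivals hz h, hb, hb]
  rfl

theorem card_nonblank_le (hz : ∀ t, z (t + 1) = globalRule (z t)) (n : ℕ) (c : ℤ) :
    ((Finset.range (53 * 212 ^ n)).filter fun t : ℕ => z t c ≠ (none, none)).card ≤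
      2 * (9 * 393 * 2 ^ n * 100 ^ (n + 1)) := by
  set U := (Finset.range (53 * 212 ^ n)).filter fun t : ℕ => z t c ≠ (none, none)
  have hclass (ε : ℤ) : (U.filter fun t : ℕ => Even (t + c + ε)).card ≤
      9 * 393 * 2 ^ n * 100 ^ (n + 1) := by
    rw [← Finset.card_map (Nat.castEmbedding (R := ℤ))]
    refine (isDiagram_arrivals (ε := ε) hz).card_visits_le n c 0 _ fun t ht => ?_
    obtain ⟨k, hk, rfl⟩ := Finset.mem_map.1 ht
    simp only [U, Finset.mem_filter, Finset.mem_range] at hk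
    obtain ⟨⟨hlt, hb⟩, he⟩ := hk
    refine ⟨k.cast_nonneg, ?_, exists_arrivals_ne_none hz he hb⟩
    simpa using (Nat.cast_lt (α := ℤ)).2 hlt
  have hcover : U ⊆ (U.filter fun t : ℕ => Even (t + c + 0)) ∪
      U.filter fun t : ℕ => Even (t + c + 1) := by
    intro t ht
    simp only [Finset.mem_union, Finset.mem_filter, ht, true_and, Int.even_iff]
    omega
  calc U.card ≤ _ := (Finset.card_le_card hcover).trans (Finset.card_union_le _ _)
    _ ≤ _ := by rw [two_mul]; exact add_le_add (hclass 0) (hclass 1)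

end Orbit

theorem tendsto_visit_frequency : Filter.Tendsto
    (fun n : ℕ => ((2 * (9 * 393 * 2 ^ n * 100 ^ (n + 1)) : ℕ) / (53 * 212 ^ n : ℕ) : ℝ))
    Filter.atTop (nhds 0) := by
  have h : (fun n : ℕ => ((2 * (9 * 393 * 2 ^ n * 100 ^ (n + 1)) : ℕ) / (53 * 212 ^ n : ℕ) : ℝ)) =
      fun n => 707400 / 53 * (200 / 212 : ℝ) ^ n := by
    funext n
    have : (200 : ℝ) ^ n = 2 ^ n * 100 ^ n := by rw [← mul_pow]; norm_num
    push_cast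
    rw [div_pow, this, pow_succ]
    ring
  rw [h, ← mul_zero (707400 / 53 : ℝ)]
  exact (tendsto_pow_atTop_nhds_zero_of_lt_one (by norm_num) (by norm_num)).const_mul _

/-- The cellular automaton, transported to the alphabet `α`. -/
noncomputable def automaton {α : Type*} (E : Cell ≃ α) : (ℤ → α) → ℤ → α :=
  (Equiv.piCongrRight fun _ : ℤ => E).conj globalRule

namespace automaton

variable {α : Type*} (E : Cell ≃ α)

theorem eq_encode (x : ℤ → α) :
    automaton E x = fun i => E (globalRule (fun j => E.symm (x j)) i) := rfl

theorem shift (x : ℤ → α) :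
    automaton E (fun i => x (i + 1)) = fun i => automaton E x (i + 1) := by
  funext i
  exact congrArg E (congrFun (globalRule_shift fun j => E.symm (x j)) i)

theorem blank : automaton E (fun _ => E (none, none)) = fun _ => E (none, none) := by
  simp_rw [eq_encode, E.symm_apply_apply, globalRule_blank]

theorem iterate_encode (n : ℕ) (x : ℤ → Cell) :
    (automaton E)^[n] (fun i => E (x i)) = fun i => E (globalRule^[n] x i) := by
  have h : Function.Semiconj (fun x i => E (x i)) globalRule (automaton E) := fun x => by
    simp_rw [eq_encode, E.symm_apply_apply]
  exact (h.iterate_right n x).symm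

theorem continuous [TopologicalSpace α] [DiscreteTopology α] :
    Continuous (automaton E) := by
  refine continuous_pi fun i => ?_
  have hpair : Continuous fun x : ℤ → α => (x (i - 1), x (i + 1)) := by fun_prop
  have hrule : Continuous fun p : α × α =>
      E (interact ((E.symm p.1).moving true) ((E.symm p.2).moving false)) :=
    continuous_of_discreteTopology
  exact hrule.comp hpair

theorem existsUnique_invariant [Finite α] [TopologicalSpace α] [DiscreteTopology α]
    [MeasurableSpace α] [DiscreteMeasurableSpace α] :
    ∃! μ : Measure (ℤ → α), IsProbabilityMeasure μ ∧
      ∀ A : Set (ℤ → α), MeasurableSet A → μ (automaton E ⁻¹' A) = μ A := by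
  refine existsUnique_invariant_of_visits (automaton.continuous E) (blank E)
    (fun n => by positivity) tendsto_visit_frequency fun z hz n c => ?_
  have hz' (t : ℤ) : (fun j => E.symm (z (t + 1) j)) = globalRule fun j => E.symm (z t j) := by
    simp_rw [hz, eq_encode, E.symm_apply_apply]
  convert card_nonblank_le (z := fun t j => E.symm (z t j)) hz' n c using 4
  exact E.symm_apply_eq.symm

end automaton

/-! ### Histories -/

namespace Compat

variable {a b : Address}

theorem instr_eq (h : Compat a b) : a.instr = b.instr := by
  rcases h with ⟨rfl | rfl, d, e⟩ | ⟨rfl | rfl, he⟩ <;>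
    simp [Address.instr_clock_eight, Address.instr_clock_four, Address.instr_clock_twelve, *]

theorem dir_eq (h : Compat a b) : a.dir = false ∧ b.dir = true := by
  rcases h with ⟨rfl | rfl, d, e⟩ | ⟨rfl | rfl, he⟩ <;> simp [Address.dir]

theorem role_of_clock_eq_zero (h : Compat a b) :
    (a.clock = 0 → a.role = false) ∧ (b.clock = 0 → b.role = true) := by
  rcases h with ⟨rfl | rfl, d, e⟩ | ⟨rfl | rfl, he⟩ <;> simp

end Compat

namespace Collision

variable {l r l' r' : State}

theorem compat (h : Collision l r l' r') : Compat l.1.tick r.1.tick := by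
  rcases h with ⟨d, e, b, c⟩ | ⟨he, b, c⟩ | h | ⟨he, b, c⟩ <;>
    simp [Address.tick, Compat.inner, Compat.outer, *]

theorem address_eq_reload (h : Collision l r l' r') :
    l'.1 = l.1.tick.reload l'.2 ∧ r'.1 = r.1.tick.reload l'.2 := by
  cases h <;> simp [Address.tick, Address.reload]

theorem exec_eq (h : Collision l r l' r') :
    l.1.tick.instr.exec l.2 r.2 = some (l'.2, r'.2) := by
  rcases h with ⟨d, e, b, c⟩ | ⟨he, b, c⟩ | h | ⟨he, b, c⟩
  · simp [Address.tick, Instr.exec]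
  · simp [Address.tick, Address.instr_clock_four, Instr.exec, he]
  · exact h
  · simp [Address.tick, Address.instr_clock_twelve, Instr.exec, he]

theorem due (h : Collision l r l' r') : l.1.Due ∧ r.1.Due := h.compat.instr_ne_idle

end Collision

/-- The particles `k` and `k + 1` collide at time `j`. -/
def Collides (pos : ℤ → ℕ → ℤ) (st : ℤ → ℕ → State) (k : ℤ) (j : ℕ) : Prop :=
  pos (k + 1) j = pos k j ∧ Collision (st k j) (st (k + 1) j) (st k (j + 1)) (st (k + 1) (j + 1))

/-- The history of a bi-infinite family of particles during `J` steps, none of which is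
annihilated: the particle `k` is at `pos k j` at time `j`, where it arrives in state `st k j` and
which it leaves in state `st k (j + 1)`. The last field lets the history be simulated from time `0`,
as the first step of a simulation reloads the address. -/
structure IsHistory (J : ℕ) (pos : ℤ → ℕ → ℤ) (st : ℤ → ℕ → State) : Prop where
  pos_succ : ∀ k j, j < J → pos k (j + 1) = pos k j + dirSign (st k (j + 1)).1.dir
  step : ∀ k j, j < J → (¬ (st k j).1.Due ∧ st k (j + 1) = (st k j).tick) ∨
    Collides pos st k j ∨ Collides pos st (k - 1) j
  le : ∀ k j, j < J → pos k j ≤ pos (k + 1) j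
  diverge : ∀ k j, j < J → pos k j = pos (k + 1) j →
    (st k (j + 1)).1.dir = false ∧ (st (k + 1) (j + 1)).1.dir = true
  even : ∀ k j, j < J → Even (pos (k + 1) j - pos k j)
  loaded : ∀ k, (st k 0).1.reloadLeft (st k 0).2 = (st k 0).1

namespace IsHistory

variable {J : ℕ} {pos : ℤ → ℕ → ℤ} {st : ℤ → ℕ → State} {k k' : ℤ} {j : ℕ}

theorem monotone (H : IsHistory J pos st) (hj : j < J) : Monotone fun k => pos k j :=
  monotone_int_of_le_succ fun k => H.le k j hj

theorem eq_succ_of_pos_eq (H : IsHistory J pos st) (hj : j < J) (hk : k < k')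
    (h : pos k j = pos k' j) : k' = k + 1 := by
  by_contra hne
  have h₁ := H.le k j hj
  have h₂ := H.le (k + 1) j hj
  have h₃ : pos (k + 1 + 1) j ≤ pos k' j := H.monotone hj (by omega)
  have hl := (H.diverge k j hj (by omega)).2
  have hr := (H.diverge (k + 1) j hj (by omega)).1
  simp [hl] at hr

theorem eq_of_pos_eq_of_dir_eq (H : IsHistory J pos st) (hj : j < J) (h : pos k j = pos k' j)
    (hd : (st k (j + 1)).1.dir = (st k' (j + 1)).1.dir) : k = k' := by
  by_contra hne
  wlog hlt : k < k' generalizing k k'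
  · exact this h.symm hd.symm (Ne.symm hne) (by omega)
  obtain rfl := H.eq_succ_of_pos_eq hj hlt h
  have := H.diverge k j hj h
  simp [this] at hd

theorem step_cases (H : IsHistory J pos st) (k : ℤ) (hj : j < J) :
    (¬ (st k j).1.Due ∧ st k (j + 1) = (st k j).tick ∧ ¬ Collides pos st k j ∧
        ¬ Collides pos st (k - 1) j) ∨
      (Collides pos st k j ∧ ¬ Collides pos st (k - 1) j) ∨
      (Collides pos st (k - 1) j ∧ ¬ Collides pos st k j) := by
  have hboth (hr : Collides pos st k j) (hl : Collides pos st (k - 1) j) : False := by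
    have hl := hl.1
    rw [sub_add_cancel] at hl
    have := H.eq_succ_of_pos_eq hj (show k - 1 < k + 1 by omega) (by rw [hr.1, hl])
    omega
  have hdue (h : Collides pos st (k - 1) j) : (st k j).1.Due := by
    have := h.2.due.2
    rwa [sub_add_cancel] at this
  rcases H.step k j hj with ⟨hn, ht⟩ | h | h
  · exact .inl ⟨hn, ht, fun h => hn h.2.due.1, fun h => hn (hdue h)⟩
  · exact .inr (.inl ⟨h, hboth h⟩)
  · exact .inr (.inr ⟨h, fun h' => hboth h' h⟩)

end IsHistory

open Classical in
/-- The particle that leaves the column `i` at time `t` in direction `d`. -/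
noncomputable def departure (pos : ℤ → ℕ → ℤ) (st : ℤ → ℕ → State) (d : Bool) (t : ℕ) (i : ℤ) :
    Option State :=
  if h : ∃ k, pos k t = i ∧ (st k (t + 1)).1.dir = d then some (st h.choose (t + 1)) else none

theorem departure_eq_none {pos : ℤ → ℕ → ℤ} {st : ℤ → ℕ → State} {d : Bool} {t : ℕ} {i : ℤ}
    (h : ∀ k, pos k t = i → (st k (t + 1)).1.dir ≠ d) : departure pos st d t i = none :=
  dif_neg fun ⟨k, hk, hd⟩ => h k hk hd

theorem dir_of_departure_eq_some {pos : ℤ → ℕ → ℤ} {st : ℤ → ℕ → State} {d : Bool} {t : ℕ} {i : ℤ}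
    {σ : State} (h : departure pos st d t i = some σ) : σ.1.dir = d := by
  unfold departure at h
  split_ifs at h with hex
  rw [← Option.some.inj h]
  exact hex.choose_spec.2

namespace IsHistory

variable {J : ℕ} {pos : ℤ → ℕ → ℤ} {st : ℤ → ℕ → State} {t : ℕ} {k i : ℤ} {d : Bool}

theorem departure_eq_some (H : IsHistory J pos st) (ht : t < J) (hk : pos k t = i)
    (hd : (st k (t + 1)).1.dir = d) : departure pos st d t i = some (st k (t + 1)) := by
  have h : ∃ k, pos k t = i ∧ (st k (t + 1)).1.dir = d := ⟨k, hk, hd⟩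
  have : h.choose = k := H.eq_of_pos_eq_of_dir_eq ht
    (h.choose_spec.1.trans hk.symm) (h.choose_spec.2.trans hd.symm)
  rw [departure, dif_pos h, this]

theorem pos_eq_sub (H : IsHistory J pos st) (ht : t < J) (hd : (st k (t + 1)).1.dir = d) :
    pos k t = i - dirSign d ↔ pos k (t + 1) = i := by
  rw [H.pos_succ k t ht, hd, eq_sub_iff_add_eq]

theorem dir_of_pos_eq (H : IsHistory J pos st) (ht : t < J)
    (h : pos k (t + 1) = pos (k + 1) (t + 1)) :
    (st k (t + 1)).1.dir = true ∧ (st (k + 1) (t + 1)).1.dir = false := by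
  have hk := H.pos_succ k t ht
  have hk' := H.pos_succ (k + 1) t ht
  have hle := H.le k t ht
  have hdiv := H.diverge k t ht
  cases hd : (st k (t + 1)).1.dir <;> cases hd' : (st (k + 1) (t + 1)).1.dir <;>
    simp [hd, hd'] at hk hk' hdiv ⊢ <;> omega

theorem interact_of_pos_eq (H : IsHistory J pos st) (ht : t < J) (h : pos k t = pos (k + 1) t) :
    interact (some (st k t)) (some (st (k + 1) t)) =
      (some (st k (t + 1)), some (st (k + 1) (t + 1))) := by
  by_cases hc : Collides pos st k t
  · simp [interact, collide_eq_some_iff.2 hc.2]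
  · have hl : (st k t).solo = some (st k (t + 1)) := by
      rw [State.solo_eq_some_iff]
      rcases H.step_cases k ht with hs | ⟨hs, -⟩ | ⟨⟨hp, -⟩, -⟩
      · exact ⟨hs.1, hs.2.1⟩
      · exact absurd hs hc
      · rw [sub_add_cancel] at hp
        have := H.eq_succ_of_pos_eq ht (show k - 1 < k + 1 by omega) (by rw [← hp, h])
        omega
    have hr : (st (k + 1) t).solo = some (st (k + 1) (t + 1)) := by
      rw [State.solo_eq_some_iff]
      rcases H.step_cases (k + 1) ht with hs | ⟨⟨hp, -⟩, -⟩ | ⟨hs, -⟩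
      · exact ⟨hs.1, hs.2.1⟩
      · have := H.eq_succ_of_pos_eq ht (show k < k + 1 + 1 by omega) (by rw [hp, h])
        omega
      · rw [add_sub_cancel_right] at hs
        exact absurd hs hc
    have hnone : collide (st k t) (st (k + 1) t) = none := by
      rw [Option.eq_none_iff_forall_not_mem]
      rintro ⟨l', r'⟩ hlr
      exact (State.solo_eq_some_iff.1 hl).1 (collide_eq_some_iff.1 hlr).due.1
    simp [interact, hnone, hl, hr]

theorem solo_of_forall_pos_eq (H : IsHistory J pos st) (ht : t < J)
    (h : ∀ k', pos k' t = pos k t → k' = k) : (st k t).solo = some (st k (t + 1)) := by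
  rw [State.solo_eq_some_iff]
  rcases H.step_cases k ht with hs | ⟨⟨hp, -⟩, -⟩ | ⟨⟨hp, -⟩, -⟩
  · exact ⟨hs.1, hs.2.1⟩
  · have := h _ hp
    omega
  · rw [sub_add_cancel] at hp
    have := h _ hp.symm
    omega

theorem departure_eq_filter (H : IsHistory J pos st) (ht : t < J) (hk : pos k t = i)
    (h : ∀ k', pos k' t = i → k' = k) (d : Bool) :
    departure pos st d t i = (some (st k (t + 1))).filter fun σ => σ.1.dir = d := by
  by_cases hd : (st k (t + 1)).1.dir = d
  · simp [H.departure_eq_some ht hk hd, Option.filter, hd]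
  · rw [departure_eq_none fun k' hk' => by rwa [h k' hk']]
    simp [Option.filter, hd]

theorem departure_succ_of_unique (H : IsHistory J pos st) (ht : t + 1 < J)
    (hk : pos k (t + 1) = i) (h : ∀ k', pos k' (t + 1) = i → k' = k) (d : Bool) :
    (interact (departure pos st true t (i - dirSign true))
      (departure pos st false t (i - dirSign false))).moving d = departure pos st d (t + 1) i := by
  obtain ⟨d₀, hd₀⟩ : ∃ d₀, (st k (t + 1)).1.dir = d₀ := ⟨_, rfl⟩
  have hin : departure pos st d₀ t (i - dirSign d₀) = some (st k (t + 1)) :=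
    H.departure_eq_some (by omega) ((H.pos_eq_sub (by omega) hd₀).2 hk) hd₀
  have hout : departure pos st (!d₀) t (i - dirSign (!d₀)) = none := by
    refine departure_eq_none fun k' hk' hd' => ?_
    obtain rfl := h k' ((H.pos_eq_sub (by omega) hd').1 hk')
    simp [hd₀] at hd'
  rw [H.departure_eq_filter ht hk h, ← H.solo_of_forall_pos_eq ht (by rwa [hk])]
  cases d₀
  · rw [hin, show departure pos st true t (i - dirSign true) = none from hout]
    cases d <;> rfl
  · rw [hin, show departure pos st false t (i - dirSign false) = none from hout]
    cases d <;> rfl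

theorem departure_succ (H : IsHistory J pos st) (ht : t + 1 < J) (i : ℤ) (d : Bool) :
    (interact (departure pos st true t (i - dirSign true))
      (departure pos st false t (i - dirSign false))).moving d = departure pos st d (t + 1) i := by
  have hpos {k : ℤ} {d : Bool} (hd : (st k (t + 1)).1.dir = d) :
      pos k t = i - dirSign d ↔ pos k (t + 1) = i := H.pos_eq_sub (by omega) hd
  by_cases hmeet : ∃ k, pos k (t + 1) = i ∧ pos (k + 1) (t + 1) = i
  · obtain ⟨k, hk, hk'⟩ := hmeet
    obtain ⟨hd, hd'⟩ := H.dir_of_pos_eq (by omega) (hk.trans hk'.symm)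
    obtain ⟨hl, hr⟩ := H.diverge k (t + 1) ht (hk.trans hk'.symm)
    rw [H.departure_eq_some (by omega) ((hpos hd).2 hk) hd,
      H.departure_eq_some (by omega) ((hpos hd').2 hk') hd',
      H.interact_of_pos_eq ht (hk.trans hk'.symm)]
    cases d
    · simp [Cell.moving, hl, H.departure_eq_some ht hk hl]
    · simp [Cell.moving, hr, H.departure_eq_some ht hk' hr]
  · by_cases hex : ∃ k, pos k (t + 1) = i
    · obtain ⟨k, hk⟩ := hex
      refine H.departure_succ_of_unique ht hk (fun k' hk' => ?_) d
      by_contra hne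
      rcases lt_or_gt_of_ne hne with hlt | hlt
      · obtain rfl := H.eq_succ_of_pos_eq ht hlt (hk'.trans hk.symm)
        exact hmeet ⟨k', hk', hk⟩
      · obtain rfl := H.eq_succ_of_pos_eq ht hlt (hk.trans hk'.symm)
        exact hmeet ⟨k, hk, hk'⟩
    · have hnone (d : Bool) : departure pos st d t (i - dirSign d) = none :=
        departure_eq_none fun k hk hd => hex ⟨k, (hpos hd).1 hk⟩
      rw [hnone, hnone, departure_eq_none fun k hk => absurd ⟨k, hk⟩ hex]
      cases d <;> rfl

theorem moving_iterate_globalRule (H : IsHistory J pos st) (ht : t < J) (i : ℤ) (d : Bool) :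
    (globalRule^[t] (fun i => (departure pos st false 0 i, departure pos st true 0 i)) i).moving d =
      departure pos st d t i := by
  induction t generalizing i d with
  | zero =>
    rw [Function.iterate_zero_apply]
    rcases h : departure pos st d 0 i with _ | σ
    · cases d <;> simp [Cell.moving, h]
    · rw [Cell.moving_eq_some_iff]
      exact ⟨by cases d <;> exact h, dir_of_departure_eq_some h⟩
  | succ t ih =>
    rw [Function.iterate_succ_apply', globalRule, ih (by omega), ih (by omega),
      ← H.departure_succ ht]
    simp

theorem exists_iterate_globalRule_ne (H : IsHistory J pos st) (ht : t < J) :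
    ∃ x, globalRule^[t] x ≠ fun _ => (none, none) := by
  refine ⟨fun i => (departure pos st false 0 i, departure pos st true 0 i), fun h => ?_⟩
  have hdep := H.departure_eq_some (k := 0) ht rfl rfl
  rw [← H.moving_iterate_globalRule ht, h] at hdep
  simp [Cell.moving] at hdep

end IsHistory

/-! ### Refinement of histories -/

theorem offset_left_le_right (d : Bool) (e e' : Instr) (i : Fin 212) :
    offset false d i ≤ offset true d i ∧ (offset false d i = offset true d i →
      Address.dir ⟨false, i, d, e⟩ = false ∧ Address.dir ⟨true, i, d, e'⟩ = true) := by
  have key : offset false d i ≤ offset true d i ∧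
      (offset false d i = offset true d i → i.val = 0 ∨ i.val = 8) := by
    have := i.isLt
    unfold offset
    cases d <;> simp only [dirSign_true, dirSign_false] <;> split_ifs <;> constructor <;> omega
  refine ⟨key.1, fun h => ?_⟩
  rcases key.2 h with h | h <;> simp [Address.dir, h]

theorem offset_right_le_next_left {Δ : ℤ} (h₀ : 0 ≤ Δ) (hΔ : Even Δ) {d d' : Bool}
    (hd : Δ = 0 → d = false ∧ d' = true) (e e' : Instr) (i : Fin 212) :
    offset true d i ≤ 196 * Δ + 8 + offset false d' i ∧
      (offset true d i = 196 * Δ + 8 + offset false d' i →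
        Address.dir ⟨true, i, d, e⟩ = false ∧ Address.dir ⟨false, i, d', e'⟩ = true) := by
  have := i.isLt
  rcases eq_or_ne Δ 0 with rfl | hne
  · obtain ⟨rfl, rfl⟩ := hd rfl
    have key : offset true false i ≤ 196 * 0 + 8 + offset false true i ∧
        (offset true false i = 196 * 0 + 8 + offset false true i → i.val = 4 ∨ i.val = 12) := by
      simp only [offset, dirSign_true, dirSign_false]
      split_ifs <;> constructor <;> omega
    refine ⟨key.1, fun h => ?_⟩
    rcases key.2 h with h | h <;> simp [Address.dir, h]
  · have : 2 ≤ Δ := by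
      obtain ⟨m, rfl⟩ := hΔ
      omega
    have key : offset true d i ≤ 196 * Δ + 8 + offset false d' i ∧
        (offset true d i = 196 * Δ + 8 + offset false d' i → i.val = 4 ∨ i.val = 208) := by
      unfold offset
      cases d <;> cases d' <;> simp only [dirSign_true, dirSign_false] <;> split_ifs <;>
        constructor <;> omega
    refine ⟨key.1, fun h => ?_⟩
    rcases key.2 h with h | h <;> simp [Address.dir, h]

theorem even_offset_sub (r d : Bool) (i : ℕ) : Even (offset r d i - i) := by
  rw [Int.even_iff]
  unfold offset
  cases r <;> cases d <;> simp only [dirSign_true, dirSign_false] <;> split_ifs <;> omega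

/-- The family indexed by `ℤ` whose members `2 * k` and `2 * k + 1` are the left and the right
member of the pair `k`. -/
def interleave {X : Type*} (f : ℤ → Bool → X) (i : ℤ) : X := f (i / 2) (decide (i % 2 = 1))

section interleave

variable {X : Type*} (f : ℤ → Bool → X) (k : ℤ)

@[simp]
theorem interleave_two_mul : interleave f (2 * k) = f k false := by
  rw [interleave, show 2 * k / 2 = k by omega, decide_eq_false (by omega)]

@[simp]
theorem interleave_two_mul_add_one : interleave f (2 * k + 1) = f k true := by
  rw [interleave, show (2 * k + 1) / 2 = k by omega, decide_eq_true (by omega)]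

@[simp]
theorem interleave_two_mul_add_one_add_one : interleave f (2 * k + 1 + 1) = f (k + 1) false := by
  rw [← interleave_two_mul f (k + 1), mul_add, mul_one, add_assoc, one_add_one_eq_two]

end interleave

section members

variable (pos : ℤ → ℕ → ℤ) (st : ℤ → ℕ → State)

/-- The address that the particle `k` is to take in the step after time `j`, before reloading. -/
def nextAddress (k : ℤ) (j : ℕ) : Address := (st k j).1.tick

open Classical in
/-- The payload of a member (the right one if `r`) of the pair which simulates the particle `k`,
on arrival of the member with clock `τ + 1` in the simulation of the step after time `j`. -/
noncomputable def payload (k : ℤ) (j : ℕ) (r : Bool) (τ : Fin 212) : Address :=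
  if r then
    if Collides pos st k j ∧ 4 ≤ τ ∧ τ < 12 then nextAddress st (k + 1) j
    else if τ < 8 then (st k j).2 else (st k (j + 1)).2
  else if Collides pos st (k - 1) j then
    if τ < 4 then nextAddress st k j else if τ < 8 then (st (k - 1) j).2
    else if τ < 12 then (st (k - 1) (j + 1)).2 else (st k (j + 1)).1
  else nextAddress st k j

/-- The state in which a member (the right one if `r`) of the pair which simulates the particle `k`
arrives at time `n`. One step of the particle is simulated in 212 steps. -/
noncomputable def memberState (k : ℤ) (r : Bool) : ℕ → State
  | 0 => (⟨r, 211, true, .idle⟩, if r then (st k 0).2 else (st k 0).1)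
  | n + 1 => (⟨r, Fin.ofNat 212 n, (nextAddress st k (n / 212)).dir,
      (nextAddress st k (n / 212)).instr⟩, payload pos st k (n / 212) r (Fin.ofNat 212 n))

/-- The position at time `n` of a member (the right one if `r`) of the pair which simulates the
particle `k`. The initial distance of neighbouring pairs of coinciding particles is 8. -/
def memberPos (k : ℤ) (r : Bool) (n : ℕ) : ℤ :=
  196 * pos k (n / 212) + 8 * k + offset r (nextAddress st k (n / 212)).dir (n % 212)

variable {pos st} {k : ℤ} {j n : ℕ} {r : Bool}

theorem memberState_succ (k : ℤ) (j : ℕ) (r : Bool) (i : Fin 212) :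
    memberState pos st k r (212 * j + i + 1) =
      (⟨r, i, (nextAddress st k j).dir, (nextAddress st k j).instr⟩, payload pos st k j r i) := by
  have hi := i.isLt
  have hdiv : (212 * j + i.val) / 212 = j := by omega
  have hmod : Fin.ofNat 212 (212 * j + i.val) = i := Fin.ext <| by
    simp only [Fin.ofNat]
    omega
  simp only [memberState, hdiv, hmod]

theorem exists_period {J : ℕ} (hn : n < 212 * J) : ∃ j < J, ∃ i : Fin 212, n = 212 * j + i :=
  ⟨n / 212, by omega, ⟨n % 212, by omega⟩, by simp only; omega⟩

theorem collides_interleave_even {p : ℤ → Bool → ℕ → ℤ} {s : ℤ → Bool → ℕ → State} :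
    Collides (interleave p) (interleave s) (2 * k) n ↔ p k true n = p k false n ∧
      Collision (s k false n) (s k true n) (s k false (n + 1)) (s k true (n + 1)) := by
  simp [Collides]

theorem collides_interleave_odd {p : ℤ → Bool → ℕ → ℤ} {s : ℤ → Bool → ℕ → State} :
    Collides (interleave p) (interleave s) (2 * k + 1) n ↔ p (k + 1) false n = p k true n ∧
      Collision (s k true n) (s (k + 1) false n) (s k true (n + 1)) (s (k + 1) false (n + 1)) := by
  simp [Collides]

theorem Collides.compat (h : Collides pos st k j) :
    Compat (nextAddress st k j) (nextAddress st (k + 1) j) :=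
  h.2.compat

theorem memberState_tick (i : Fin 212) (hi : i + 1 ≠ 0)
    (hinstr : (⟨r, i + 1, (nextAddress st k j).dir, (nextAddress st k j).instr⟩ :
      Address).instr = .idle)
    (hpay : payload pos st k j r (i + 1) = payload pos st k j r i) :
    ¬ (memberState pos st k r (212 * j + (i + 1 : Fin 212))).1.Due ∧
      memberState pos st k r (212 * j + (i + 1 : Fin 212) + 1) =
        (memberState pos st k r (212 * j + (i + 1 : Fin 212))).tick := by
  have hval : (i + 1).val = i.val + 1 := by
    rw [Fin.val_add_one, if_neg]
    rintro rfl
    exact hi rfl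
  rw [memberState_succ, hpay, hval, ← add_assoc, memberState_succ]
  exact ⟨not_not.2 hinstr, rfl⟩

end members

namespace IsHistory

variable {J : ℕ} {pos : ℤ → ℕ → ℤ} {st : ℤ → ℕ → State} {k : ℤ} {j n : ℕ}

theorem dir_succ (H : IsHistory J pos st) (k : ℤ) (hj : j < J) :
    (st k (j + 1)).1.dir = (nextAddress st k j).dir := by
  rcases H.step k j hj with ⟨-, h⟩ | ⟨-, h⟩ | ⟨-, h⟩
  · rw [h]
    rfl
  · rw [h.address_eq_reload.1, Address.dir_reload]
    rfl
  · rw [sub_add_cancel] at h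
    rw [h.address_eq_reload.2, Address.dir_reload]
    rfl

theorem memberPos_add (H : IsHistory J pos st) (k : ℤ) (r : Bool) (hj : j < J) {i : ℕ}
    (hi : i ≤ 212) : memberPos pos st k r (212 * j + i) =
      196 * pos k j + 8 * k + offset r (nextAddress st k j).dir i := by
  unfold memberPos
  rcases hi.lt_or_eq with hi | rfl
  · rw [show (212 * j + i) / 212 = j by omega, show (212 * j + i) % 212 = i by omega]
  · rw [show (212 * j + 212) / 212 = j + 1 by omega, show (212 * j + 212) % 212 = 0 by omega,
      offset_end, H.pos_succ k j hj, H.dir_succ k hj]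
    simp [offset]
    ring

theorem memberPos_succ (H : IsHistory J pos st) (k : ℤ) (r : Bool) (hn : n < 212 * J) :
    memberPos pos st k r (n + 1) =
      memberPos pos st k r n + dirSign (memberState pos st k r (n + 1)).1.dir := by
  obtain ⟨j, hj, i, rfl⟩ := exists_period hn
  rw [memberState_succ, H.memberPos_add k r hj i.isLt.le, add_assoc,
    H.memberPos_add k r hj i.isLt, offset_succ]
  ring

theorem members_of_pair (H : IsHistory J pos st) (k : ℤ) (hn : n < 212 * J) :
    memberPos pos st k false n ≤ memberPos pos st k true n ∧
      (memberPos pos st k false n = memberPos pos st k true n →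
        (memberState pos st k false (n + 1)).1.dir = false ∧
          (memberState pos st k true (n + 1)).1.dir = true) ∧
      Even (memberPos pos st k true n - memberPos pos st k false n) := by
  obtain ⟨j, hj, i, rfl⟩ := exists_period hn
  simp only [memberState_succ, H.memberPos_add k _ hj i.isLt.le, add_le_add_iff_left,
    add_right_inj]
  have hgap := offset_left_le_right (nextAddress st k j).dir (nextAddress st k j).instr
    (nextAddress st k j).instr i
  refine ⟨hgap.1, hgap.2, ?_⟩
  have := (even_offset_sub true (nextAddress st k j).dir i).sub
    (even_offset_sub false (nextAddress st k j).dir i)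
  ring_nf at this ⊢
  exact this

theorem members_of_neighbours (H : IsHistory J pos st) (k : ℤ) (hn : n < 212 * J) :
    memberPos pos st k true n ≤ memberPos pos st (k + 1) false n ∧
      (memberPos pos st k true n = memberPos pos st (k + 1) false n →
        (memberState pos st k true (n + 1)).1.dir = false ∧
          (memberState pos st (k + 1) false (n + 1)).1.dir = true) ∧
      Even (memberPos pos st (k + 1) false n - memberPos pos st k true n) := by
  obtain ⟨j, hj, i, rfl⟩ := exists_period hn
  simp only [memberState_succ, H.memberPos_add _ _ hj i.isLt.le]
  have hle := H.le k j hj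
  have heven := H.even k j hj
  have hdiv := H.diverge k j hj
  rw [H.dir_succ k hj, H.dir_succ _ hj] at hdiv
  have hgap := offset_right_le_next_left (sub_nonneg.2 hle) heven
    (fun h => hdiv (by omega)) (nextAddress st k j).instr (nextAddress st (k + 1) j).instr i
  have hl := even_offset_sub false (nextAddress st (k + 1) j).dir i
  have hr := even_offset_sub true (nextAddress st k j).dir i
  rw [Int.even_iff] at hl hr ⊢
  exact ⟨by linarith [hgap.1], fun h => hgap.2 (by linarith), by omega⟩

end IsHistory

namespace IsHistory

variable {J : ℕ} {pos : ℤ → ℕ → ℤ} {st : ℤ → ℕ → State} {k : ℤ} {j n : ℕ}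

theorem reloadLeft_payload_last (H : IsHistory J pos st) (k : ℤ) (hj : j < J) :
    (payload pos st k j false 211).reloadLeft (st k (j + 1)).2 = (st k (j + 1)).1 := by
  rcases H.step_cases k hj with ⟨hdue, htick, -, hl⟩ | ⟨hr, hl⟩ | ⟨hl, -⟩
  · rw [htick]
    simpa [payload, hl, nextAddress, State.tick] using Address.reloadLeft_of_clock_ne_zero
      (Address.clock_ne_zero_of_instr (not_not.1 hdue)) _
  · have hrole := hr.compat.role_of_clock_eq_zero.1
    simp only [payload, hl, if_false, Bool.false_eq_true, hr.2.address_eq_reload.1]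
    change (nextAddress st k j).reloadLeft _ = (nextAddress st k j).reload _
    by_cases h : (nextAddress st k j).clock = 0
    · simp [Address.reloadLeft, hrole h]
    · rw [Address.reloadLeft_of_clock_ne_zero h, Address.reload_of_clock_ne_zero h]
  · have hcol := hl.2
    have hrole := hl.compat.role_of_clock_eq_zero.2
    rw [sub_add_cancel] at hcol hrole
    have hreload : (st k (j + 1)).1 = (nextAddress st k j).reload _ := hcol.address_eq_reload.2
    simp only [payload, hl, if_true, Bool.false_eq_true, if_false, Fin.reduceLT]
    by_cases h : (nextAddress st k j).clock = 0
    · rw [Address.reloadLeft, if_neg]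
      rw [hreload]
      simp [Address.reload, hrole h, h]
    · rw [hreload, Address.reload_of_clock_ne_zero h, Address.reloadLeft_of_clock_ne_zero h]

theorem memberState_period_start (H : IsHistory J pos st) (k : ℤ) (hj : j ≤ J) :
    ∃ d e b, memberState pos st k false (212 * j) = (⟨false, 211, d, e⟩, b) ∧
      memberState pos st k true (212 * j) = (⟨true, 211, d, e⟩, (st k j).2) ∧
      b.reloadLeft (st k j).2 = (st k j).1 := by
  rcases j with _ | j
  · exact ⟨true, .idle, (st k 0).1, rfl, rfl, H.loaded k⟩
  · have h (r : Bool) := memberState_succ (pos := pos) (st := st) k j r 211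
    rw [show 212 * j + ((211 : Fin 212) : ℕ) + 1 = 212 * (j + 1) by simp; ring] at h
    refine ⟨_, _, _, h false, ?_, H.reloadLeft_payload_last k hj⟩
    rw [h true]
    simp [payload]

theorem collides_advance (H : IsHistory J pos st) (k : ℤ) (hj : j < J) :
    Collides (interleave (memberPos pos st)) (interleave (memberState pos st)) (2 * k)
      (212 * j) := by
  obtain ⟨d, e, b, hl, hr, hb⟩ := H.memberState_period_start k hj.le
  have hs (r : Bool) := memberState_succ (pos := pos) (st := st) k j r 0
  have hp (r : Bool) := H.memberPos_add k r hj (i := 0) (by omega)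
  simp only [Fin.val_zero, add_zero] at hs hp
  rw [collides_interleave_even]
  refine ⟨by simp [hp, offset], ?_⟩
  have hA : nextAddress st k j = (b.reloadLeft (st k j).2).tick := by
    rw [hb]
    rfl
  rw [hs, hs, hl, hr]
  simpa [payload, hA] using Collision.advance d e b (st k j).2

theorem collides_execute (H : IsHistory J pos st) (k : ℤ) (hj : j < J) :
    Collides (interleave (memberPos pos st)) (interleave (memberState pos st)) (2 * k)
      (212 * j + 8) := by
  have hs (r : Bool) := memberState_succ (pos := pos) (st := st) k j r 7
  have hs' (r : Bool) := memberState_succ (pos := pos) (st := st) k j r 8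
  rw [collides_interleave_even]
  refine ⟨by simp [H.memberPos_add k _ hj (i := 8), offset], ?_⟩
  refine (hs false).symm ▸ (hs true).symm ▸ (hs' false).symm ▸ (hs' true).symm ▸ .execute ?_
  rw [Address.instr_clock_eight]
  rcases H.step_cases k hj with ⟨hdue, htick, hr, hl⟩ | ⟨hr, hl⟩ | ⟨hl, hr⟩
  · have hidle : (nextAddress st k j).instr = .idle := not_not.1 hdue
    simp [hidle, Instr.exec, payload, hr, hl, htick, State.tick]
  · have hc := hr.compat
    simp [hc.instr_ne_idle.1, hc.dir_eq.1, Instr.exec, payload, hr, hl, hc]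
  · have hc := hl.compat
    have hexec : (nextAddress st (k - 1) j).instr.exec _ _ = _ := hl.2.exec_eq
    rw [hc.instr_eq] at hexec
    rw [sub_add_cancel] at hc hexec
    simp [hc.instr_ne_idle.2, hc.dir_eq.2, payload, hr, hl, hexec]

theorem collides_swap (H : IsHistory J pos st) (hj : j < J) (h : Collides pos st k j) :
    Collides (interleave (memberPos pos st)) (interleave (memberState pos st)) (2 * k + 1)
      (212 * j + 4) := by
  have hs (k : ℤ) (r : Bool) := memberState_succ (pos := pos) (st := st) k j r 3
  have hs' (k : ℤ) (r : Bool) := memberState_succ (pos := pos) (st := st) k j r 4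
  have hc := h.compat
  rw [collides_interleave_odd]
  constructor
  · simp [H.memberPos_add _ _ hj (i := 4), offset, h.1]
    ring
  · refine (hs k true).symm ▸ (hs (k + 1) false).symm ▸ (hs' k true).symm ▸
      (hs' (k + 1) false).symm ▸ ?_
    rw [hc.dir_eq.1, hc.dir_eq.2, hc.instr_eq]
    simpa [payload, h] using Collision.swap hc.instr_ne_idle.2 _ _

theorem collides_swapBack (H : IsHistory J pos st) (hj : j < J) (h : Collides pos st k j) :
    Collides (interleave (memberPos pos st)) (interleave (memberState pos st)) (2 * k + 1)
      (212 * j + 12) := by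
  have hs (k : ℤ) (r : Bool) := memberState_succ (pos := pos) (st := st) k j r 11
  have hs' (k : ℤ) (r : Bool) := memberState_succ (pos := pos) (st := st) k j r 12
  have hc := h.compat
  rw [collides_interleave_odd]
  constructor
  · simp [H.memberPos_add _ _ hj (i := 12), offset, h.1]
    ring
  · refine (hs k true).symm ▸ (hs (k + 1) false).symm ▸ (hs' k true).symm ▸
      (hs' (k + 1) false).symm ▸ ?_
    rw [hc.dir_eq.1, hc.dir_eq.2, hc.instr_eq]
    have hreload : (st (k + 1) (j + 1)).1 = (nextAddress st (k + 1) j).reload _ :=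
      h.2.address_eq_reload.2
    simpa [payload, h, hreload] using Collision.swapBack hc.instr_ne_idle.2 _ _

theorem step_left (H : IsHistory J pos st) (k : ℤ) (hn : n < 212 * J) :
    (¬ (memberState pos st k false n).1.Due ∧
        memberState pos st k false (n + 1) = (memberState pos st k false n).tick) ∨
      Collides (interleave (memberPos pos st)) (interleave (memberState pos st)) (2 * k) n ∨
      Collides (interleave (memberPos pos st)) (interleave (memberState pos st))
        (2 * (k - 1) + 1) n := by
  obtain ⟨j, hj, i, rfl⟩ := exists_period hn
  by_cases h0 : i = 0
  · subst h0
    exact .inr (.inl (H.collides_advance k hj))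
  by_cases h8 : i = 8
  · subst h8
    exact .inr (.inl (H.collides_execute k hj))
  obtain ⟨i, rfl⟩ : ∃ i', i = i' + 1 := ⟨i - 1, by simp⟩
  by_cases hl : Collides pos st (k - 1) j
  · by_cases h4 : i + 1 = 4
    · rw [h4]
      exact .inr (.inr (H.collides_swap hj hl))
    by_cases h12 : i + 1 = 12
    · rw [h12]
      exact .inr (.inr (H.collides_swapBack hj hl))
    refine .inl (memberState_tick i h0 (Address.instr_eq_idle h0 h8 (.inl ⟨h4, h12⟩)) ?_)
    simp only [payload, hl, if_true]
    grind
  · refine .inl (memberState_tick i h0 (Address.instr_eq_idle h0 h8 (.inr ?_)) ?_)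
    · rcases H.step_cases k hj with ⟨hdue, -⟩ | ⟨hr, -⟩ | ⟨hl', -⟩
      · exact .inl (not_not.1 hdue)
      · exact .inr hr.compat.dir_eq.1
      · exact absurd hl' hl
    · simp [payload, hl]

theorem step_right (H : IsHistory J pos st) (k : ℤ) (hn : n < 212 * J) :
    (¬ (memberState pos st k true n).1.Due ∧
        memberState pos st k true (n + 1) = (memberState pos st k true n).tick) ∨
      Collides (interleave (memberPos pos st)) (interleave (memberState pos st)) (2 * k + 1) n ∨
      Collides (interleave (memberPos pos st)) (interleave (memberState pos st)) (2 * k) n := by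
  obtain ⟨j, hj, i, rfl⟩ := exists_period hn
  by_cases h0 : i = 0
  · subst h0
    exact .inr (.inr (H.collides_advance k hj))
  by_cases h8 : i = 8
  · subst h8
    exact .inr (.inr (H.collides_execute k hj))
  obtain ⟨i, rfl⟩ : ∃ i', i = i' + 1 := ⟨i - 1, by simp⟩
  by_cases hr : Collides pos st k j
  · by_cases h4 : i + 1 = 4
    · rw [h4]
      exact .inr (.inl (H.collides_swap hj hr))
    by_cases h12 : i + 1 = 12
    · rw [h12]
      exact .inr (.inl (H.collides_swapBack hj hr))
    refine .inl (memberState_tick i h0 (Address.instr_eq_idle h0 h8 (.inl ⟨h4, h12⟩)) ?_)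
    simp only [payload, hr, true_and, if_true]
    grind
  · refine .inl (memberState_tick i h0 (Address.instr_eq_idle h0 h8 (.inr ?_)) ?_)
    · rcases H.step_cases k hj with ⟨hdue, -⟩ | ⟨hr', -⟩ | ⟨hl, -⟩
      · exact .inl (not_not.1 hdue)
      · exact absurd hr' hr
      · have := hl.compat.dir_eq.2
        rw [sub_add_cancel] at this
        exact .inr this
    · simp only [payload, hr, false_and, if_true, if_false]
      grind

theorem refine (H : IsHistory J pos st) : IsHistory (212 * J) (interleave (memberPos pos st))
    (interleave (memberState pos st)) where
  pos_succ i n hn := H.memberPos_succ _ _ hn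
  step i n hn := by
    obtain ⟨k, rfl | rfl⟩ := Int.even_or_odd' i
    · rw [interleave_two_mul, show 2 * k - 1 = 2 * (k - 1) + 1 by ring]
      exact H.step_left k hn
    · rw [interleave_two_mul_add_one, add_sub_cancel_right]
      exact H.step_right k hn
  le i n hn := by
    obtain ⟨k, rfl | rfl⟩ := Int.even_or_odd' i
    · simpa using (H.members_of_pair k hn).1
    · simpa using (H.members_of_neighbours k hn).1
  diverge i n hn := by
    obtain ⟨k, rfl | rfl⟩ := Int.even_or_odd' i
    · simpa using (H.members_of_pair k hn).2.1
    · simpa using (H.members_of_neighbours k hn).2.1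
  even i n hn := by
    obtain ⟨k, rfl | rfl⟩ := Int.even_or_odd' i
    · simpa using (H.members_of_pair k hn).2.2
    · simpa using (H.members_of_neighbours k hn).2.2
  loaded i := Address.reloadLeft_of_clock_ne_zero (by simp [interleave, memberState]) _

theorem exists_of_length_one : ∃ pos st, IsHistory 1 pos st :=
  ⟨fun k j => 4 * k + j,
    fun _ j => (⟨false, if j = 0 then 13 else 14, true, .idle⟩, ⟨false, 13, true, .idle⟩),
    { pos_succ := fun k j hj => by
        obtain rfl : j = 0 := by omega
        simp [Address.dir]
      step := fun k j hj => by
        obtain rfl : j = 0 := by omega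
        exact .inl ⟨by simp [Address.Due, Address.tick, Address.instr], rfl⟩
      le := fun k j _ => by omega
      diverge := fun k j _ h => by omega
      even := fun k j _ => ⟨2, by ring⟩
      loaded := fun _ => by simp [Address.reloadLeft, Address.reload] }⟩

theorem exists_of_length_pow (n : ℕ) : ∃ pos st, IsHistory (212 ^ n) pos st := by
  induction n with
  | zero => exact exists_of_length_one
  | succ n ih =>
    obtain ⟨pos, st, H⟩ := ih
    exact ⟨_, _, pow_succ' 212 n ▸ H.refine⟩

end IsHistory

theorem exists_iterate_globalRule_ne_blank (n : ℕ) :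
    ∃ x, globalRule^[n] x ≠ fun _ => (none, none) := by
  obtain ⟨pos, st, H⟩ := IsHistory.exists_of_length_pow n
  exact H.exists_iterate_globalRule_ne (Nat.lt_pow_self (by norm_num))

end HierarchicalCA

/-- There exists a cellular automaton (a continuous, shift-commuting map
on `α^ℤ` for a finite alphabet `α = Fin (m+1)`) with a quiescent state `B` which is
uniquely ergodic but not nilpotent. -/
theorem exists_uniquelyErgodic_not_nilpotent_CA :
    ∃ (m : ℕ) (B : Fin (m + 1)) (Φ : (ℤ → Fin (m + 1)) → (ℤ → Fin (m + 1))),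
      Continuous Φ ∧
      (∀ x : ℤ → Fin (m + 1), Φ (fun i => x (i + 1)) = fun i => Φ x (i + 1)) ∧
      Φ (fun _ => B) = (fun _ => B) ∧
      (∃! μ : Measure (ℤ → Fin (m + 1)), IsProbabilityMeasure μ ∧
          ∀ A : Set (ℤ → Fin (m + 1)), MeasurableSet A → μ (Φ ⁻¹' A) = μ A) ∧
      ¬ (∃ n : ℕ, ∀ x : ℤ → Fin (m + 1), Φ^[n] x = fun _ => B) := by
  obtain ⟨m, hm⟩ := Nat.exists_eq_succ_of_ne_zero (Nat.card_pos (α := HierarchicalCA.Cell)).ne'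
  let E : HierarchicalCA.Cell ≃ Fin (m + 1) := Finite.equivFinOfCardEq hm
  refine ⟨m, E (none, none), HierarchicalCA.automaton E, HierarchicalCA.automaton.continuous E,
    HierarchicalCA.automaton.shift E, HierarchicalCA.automaton.blank E,
    HierarchicalCA.automaton.existsUnique_invariant E, ?_⟩
  rintro ⟨n, hn⟩
  obtain ⟨x, hx⟩ := HierarchicalCA.exists_iterate_globalRule_ne_blank n
  refine hx (funext fun i => E.injective ?_)
  rw [← congrFun (hn fun i => E (x i)) i, HierarchicalCA.automaton.iterate_encode]
end
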